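/- Let 𝕄 = ⟨M, 𝒞⟩ be a countable transitive model of GB⁻ and let ℙ be a notion of class forcing for 𝕄 with the set decision property. Then ℙ satisfies the forcing theorem over 𝕄, and moreover ℙ adds no new sets: M[G] = M for every ℙ-generic filter G over 𝕄. -/

import Mathlib

noncomputable section

namespace CF

open scoped ZFSet

attribute [local instance] Classical.propDecidable

/-! ### First-order formulas of the language of set theory -/

/-- First-order `∈`-formulas with variables indexed by `ℕ`. -/
inductive EFormula : Type
  | mem : ℕ → ℕ → EFormula
  | eq : ℕ → ℕ → EFormula
  | not : EFormula → EFormula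
  | or : EFormula → EFormula → EFormula
  | ex : ℕ → EFormula → EFormula

/-- Satisfaction of an `∈`-formula in the structure `⟨D, ∈⟩` under assignment `v`. -/
def EFormula.Sat (D : Set ZFSet) (v : ℕ → ZFSet) : EFormula → Prop
  | .mem i j => v i ∈ v j
  | .eq i j => v i = v j
  | .not φ => ¬ EFormula.Sat D v φ
  | .or φ ψ => EFormula.Sat D v φ ∨ EFormula.Sat D v ψ
  | .ex i φ => ∃ x ∈ D, EFormula.Sat D (Function.update v i x) φ

/-- All variables occurring in the formula are `< m`. -/
def EFormula.VarsLt (m : ℕ) : EFormula → Prop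
  | .mem i j => i < m ∧ j < m
  | .eq i j => i < m ∧ j < m
  | .not φ => EFormula.VarsLt m φ
  | .or φ ψ => EFormula.VarsLt m φ ∧ EFormula.VarsLt m ψ
  | .ex i φ => i < m ∧ EFormula.VarsLt m φ

/-- First-order formulas of the two-sorted language of `GB⁻`: set variables indexed by `ℕ`,
class parameters indexed by `ℕ`, and only set quantifiers. -/
inductive GBFormula : Type
  | mem : ℕ → ℕ → GBFormula
  | eq : ℕ → ℕ → GBFormula
  | cls : ℕ → ℕ → GBFormula    -- `vᵢ ∈ C_j`
  | not : GBFormula → GBFormula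
  | or : GBFormula → GBFormula → GBFormula
  | ex : ℕ → GBFormula → GBFormula

/-- Satisfaction of a `GBFormula` with set quantifiers ranging over `Mset`,
class parameters `Cs` and set assignment `v`. -/
def GBFormula.Sat (Mset : Set ZFSet) (Cs : ℕ → Set ZFSet) (v : ℕ → ZFSet) : GBFormula → Prop
  | .mem i j => v i ∈ v j
  | .eq i j => v i = v j
  | .cls i j => v i ∈ Cs j
  | .not φ => ¬ GBFormula.Sat Mset Cs v φ
  | .or φ ψ => GBFormula.Sat Mset Cs v φ ∨ GBFormula.Sat Mset Cs v ψ
  | .ex i φ => ∃ x ∈ Mset, GBFormula.Sat Mset Cs (Function.update v i x) φ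

/-! ### Countable transitive models of GB⁻ -/

/-- A countable transitive second-order model `𝕄 = ⟨M, 𝒞⟩` of `GB⁻`:
`M` is transitive and countable, classes are subsets of `M`, sets are classes, and the axioms
of `GB⁻` hold (extensionality and foundation are automatic for `ZFSet`; the set axioms of `ZF⁻`
with separation and collection allowing class parameters, together with first-order class
comprehension, are listed). -/
structure GBModel.{u_1} where
  M : Set ZFSet.{u_1}
  Cls : Set (Set ZFSet)
  countable_M : M.Countable
  countable_Cls : Cls.Countable
  transitive : ∀ x ∈ M, ∀ y : ZFSet, y ∈ x → y ∈ M
  sets_are_classes : ∀ x ∈ M, x.toSet ∈ Cls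
  classes_sub : ∀ C ∈ Cls, C ⊆ M
  empty_mem : (∅ : ZFSet) ∈ M
  pair_mem : ∀ x ∈ M, ∀ y ∈ M, ({x, y} : ZFSet) ∈ M
  sUnion_mem : ∀ x ∈ M, (⋃₀ x : ZFSet) ∈ M
  omega_mem : ZFSet.omega ∈ M
  comprehension : ∀ (φ : GBFormula) (v : ℕ → ZFSet) (Cs : ℕ → Set ZFSet),
    (∀ n, v n ∈ M) → (∀ n, Cs n ∈ Cls) →
    {x : ZFSet | x ∈ M ∧ GBFormula.Sat M Cs (Function.update v 0 x) φ} ∈ Cls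
  separation : ∀ C ∈ Cls, ∀ a ∈ M, ∃ b ∈ M, ∀ x : ZFSet, x ∈ b ↔ x ∈ a ∧ x ∈ C
  collection : ∀ C ∈ Cls, ∀ a ∈ M,
    (∀ x : ZFSet, x ∈ a → ∃ y ∈ M, x.pair y ∈ C) →
    ∃ b ∈ M, ∀ x : ZFSet, x ∈ a → ∃ y : ZFSet, y ∈ b ∧ x.pair y ∈ C

/-- A notion of class forcing `ℙ = ⟨P, ≤_ℙ⟩` for `𝕄`: a partial order (with maximal element
`𝟙_ℙ`) whose domain and order relation are classes of `𝕄`. -/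
structure ClassForcing (𝕄 : GBModel) where
  P : Set ZFSet
  le : ZFSet → ZFSet → Prop
  one : ZFSet
  one_mem : one ∈ P
  le_one : ∀ p ∈ P, le p one
  le_refl : ∀ p ∈ P, le p p
  le_trans : ∀ p q r : ZFSet, le p q → le q r → le p r
  P_cls : P ∈ 𝕄.Cls
  le_cls : {x : ZFSet | ∃ p ∈ P, ∃ q ∈ P, le p q ∧ x = p.pair q} ∈ 𝕄.Cls

/-! ### Names and their evaluation -/

/-- Auxiliary rank-bounded version of `IsName`. -/
def IsNameAux (S : Set ZFSet) (o : Ordinal) (σ : ZFSet) : Prop :=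
  ∀ x ∈ σ.toSet, ∃ τ p : ZFSet, x = τ.pair p ∧ p ∈ S ∧
    ∃ _h : τ.rank < o, IsNameAux S τ.rank τ
termination_by o

/-- `σ` is a `ℙ`-name (for the forcing with conditions `S`): every element of `σ` is a pair
`⟨τ, p⟩` with `τ` a `ℙ`-name and `p ∈ S`. -/
def IsName (S : Set ZFSet) (σ : ZFSet) : Prop := IsNameAux S σ.rank σ

/-- Image of a ZFSet under an arbitrary function (using choice for definability). -/
def zimage (f : ZFSet → ZFSet) (x : ZFSet) : ZFSet :=
  @ZFSet.image f (Classical.allZFSetDefinable _) x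

/-- Auxiliary rank-bounded version of the evaluation `σ^G` of a name by a filter. -/
def nameEvalAux (G : Set ZFSet) (o : Ordinal) (σ : ZFSet) : ZFSet :=
  zimage (fun τ => if h : τ.rank < o then nameEvalAux G τ.rank τ else ∅)
    (ZFSet.sep (fun τ => ∃ p, p ∈ G ∧ τ.pair p ∈ σ) (⋃₀ ⋃₀ σ))
termination_by o
decreasing_by exact h

/-- The evaluation `σ^G = {τ^G | ∃ p ∈ G, ⟨τ, p⟩ ∈ σ}` of a name `σ` by a filter `G`. -/
def nameEval (G : Set ZFSet) (σ : ZFSet) : ZFSet := nameEvalAux G σ.rank σ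

/-- Auxiliary rank-bounded version of `nameTC`. -/
def nameTCAux (o : Ordinal) (σ : ZFSet) : Set ZFSet :=
  {x | ∃ τ p : ZFSet, τ.pair p ∈ σ ∧ (x = p ∨ ∃ _h : τ.rank < o, x ∈ nameTCAux τ.rank τ)}
termination_by o

/-- The set `tc(σ) = ⋃ {{p} ∪ tc(τ) | ⟨τ,p⟩ ∈ σ}` of conditions appearing in the transitive
closure of the name `σ`. -/
def nameTC (σ : ZFSet) : Set ZFSet := nameTCAux σ.rank σ

/-! ### Filters, genericity, generic extensions -/

/-- `G` is a filter on the partial order with domain `S` and ordering `le`. -/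
def IsFilterOn (S : Set ZFSet) (le : ZFSet → ZFSet → Prop) (G : Set ZFSet) : Prop :=
  G ⊆ S ∧ G.Nonempty ∧ (∀ p ∈ G, ∀ q ∈ S, le p q → q ∈ G) ∧
    ∀ p ∈ G, ∀ q ∈ G, ∃ r ∈ G, le r p ∧ le r q

/-- `D` is a dense subclass of the partial order `⟨S, le⟩`. -/
def DenseIn (S : Set ZFSet) (le : ZFSet → ZFSet → Prop) (D : Set ZFSet) : Prop :=
  D ⊆ S ∧ ∀ p ∈ S, ∃ q ∈ D, le q p

/-- `G` is a generic filter on `⟨S, le⟩` over `𝕄`: a filter meeting every dense subclass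
of `⟨S, le⟩` lying in `𝒞`. -/
def IsGeneric (𝕄 : GBModel) (S : Set ZFSet) (le : ZFSet → ZFSet → Prop) (G : Set ZFSet) : Prop :=
  IsFilterOn S le G ∧ ∀ D ∈ 𝕄.Cls, DenseIn S le D → (G ∩ D).Nonempty

/-- The generic extension `M[G] = {σ^G | σ ∈ M a name for the forcing with domain S}`. -/
def MGen (𝕄 : GBModel) (S : Set ZFSet) (G : Set ZFSet) : Set ZFSet :=
  {x | ∃ σ : ZFSet, σ ∈ 𝕄.M ∧ IsName S σ ∧ nameEval G σ = x}

/-! ### Compatibility, the set decision property -/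

/-- `p` and `q` are compatible in `⟨S, le⟩`. -/
def Compat (S : Set ZFSet) (le : ZFSet → ZFSet → Prop) (p q : ZFSet) : Prop :=
  ∃ r ∈ S, le r p ∧ le r q

/-- `p ≤* q` : every extension of `p` is compatible with `q`. -/
def leStar (S : Set ZFSet) (le : ZFSet → ZFSet → Prop) (p q : ZFSet) : Prop :=
  ∀ r ∈ S, le r p → Compat S le r q

/-- `p` decides the set of conditions `A`: for every `a ∈ A`, either `p ≤* a` or `p ⊥ a`. -/
def Decides (S : Set ZFSet) (le : ZFSet → ZFSet → Prop) (p A : ZFSet) : Prop :=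
  ∀ a : ZFSet, a ∈ A → leStar S le p a ∨ ¬ Compat S le p a

/-- The set decision property: every set of conditions in `M` is decided densely. -/
def SetDecisionProperty (𝕄 : GBModel) (F : ClassForcing 𝕄) : Prop :=
  ∀ p ∈ F.P, ∀ A : ZFSet, A ∈ 𝕄.M → (∀ a : ZFSet, a ∈ A → a ∈ F.P) →
    ∃ q ∈ F.P, F.le q p ∧ Decides F.P F.le q A

/-! ### The forcing theorem -/

/-- Encode a finite list of sets as a single set by iterated Kuratowski pairing. -/
def listEncode : List ZFSet → ZFSet
  | [] => ∅
  | a :: l => a.pair (listEncode l)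

/-- The assignment sending variable `n < m` to `σₙ^G` (and `∅` beyond `m`). -/
def namesAssign (G : Set ZFSet) (m : ℕ) (σs : Fin m → ZFSet) : ℕ → ZFSet :=
  fun n => if h : n < m then nameEval G (σs ⟨n, h⟩) else ∅

/-- `p ⊩_ℙ φ(σ₀, …, σ_{m-1})` : for every generic `G ∋ p`, `M[G] ⊨ φ(σ₀^G, …, σ_{m-1}^G)`. -/
def Forces (𝕄 : GBModel) (F : ClassForcing 𝕄) (φ : EFormula) (m : ℕ) (p : ZFSet)
    (σs : Fin m → ZFSet) : Prop :=
  ∀ G : Set ZFSet, IsGeneric 𝕄 F.P F.le G → p ∈ G →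
    EFormula.Sat (MGen 𝕄 F.P G) (namesAssign G m σs) φ

/-- `ℙ` satisfies the forcing theorem over `𝕄`: for every `∈`-formula `φ(v₀,…,v_{m-1})`,
the forcing relation is a class of `𝕄` (definability lemma) and everything true in a generic
extension is forced by a condition in the generic filter (truth lemma). -/
def SatisfiesForcingTheorem (𝕄 : GBModel) (F : ClassForcing 𝕄) : Prop :=
  ∀ (φ : EFormula) (m : ℕ), EFormula.VarsLt m φ →
    ({x : ZFSet | ∃ p ∈ F.P, ∃ σs : Fin m → ZFSet,
        (∀ i, σs i ∈ 𝕄.M ∧ IsName F.P (σs i)) ∧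
        Forces 𝕄 F φ m p σs ∧
        x = p.pair (listEncode (List.ofFn σs))} ∈ 𝕄.Cls) ∧
    ∀ σs : Fin m → ZFSet, (∀ i, σs i ∈ 𝕄.M ∧ IsName F.P (σs i)) →
      ∀ G : Set ZFSet, IsGeneric 𝕄 F.P F.le G →
        EFormula.Sat (MGen 𝕄 F.P G) (namesAssign G m σs) φ →
        ∃ p ∈ G, Forces 𝕄 F φ m p σs

/-! ### Complete subforcings, the set reduction property -/

/-- `A` is an antichain of the partial order `⟨S, le⟩`. -/
def IsAntichainIn (S : Set ZFSet) (le : ZFSet → ZFSet → Prop) (A : Set ZFSet) : Prop :=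
  A ⊆ S ∧ ∀ p ∈ A, ∀ q ∈ A, p ≠ q → ¬ Compat S le p q

/-- `A` is a maximal antichain of the partial order `⟨S, le⟩`. -/
def IsMaxAntichainIn (S : Set ZFSet) (le : ZFSet → ZFSet → Prop) (A : Set ZFSet) : Prop :=
  IsAntichainIn S le A ∧ ∀ p ∈ S, ∃ a ∈ A, Compat S le p a

/-- `ℚ ⊲∘ ℙ` : `Q` is a set-sized complete subforcing of `ℙ` (with the induced ordering):
`Q ∈ M`, `Q ⊆ P`, `𝟙 ∈ Q`, and every maximal antichain of `ℚ` in `M` is predense in `ℙ`. -/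
def IsCompleteSub (𝕄 : GBModel) (F : ClassForcing 𝕄) (Q : ZFSet) : Prop :=
  Q ∈ 𝕄.M ∧ Q.toSet ⊆ F.P ∧ F.one ∈ Q ∧
    ∀ A : ZFSet, A ∈ 𝕄.M → A.toSet ⊆ Q.toSet → IsMaxAntichainIn Q.toSet F.le A.toSet →
      ∀ p ∈ F.P, ∃ a : ZFSet, a ∈ A ∧ Compat F.P F.le p a

/-- `ℚ^{∥q}` : the conditions of `Q` compatible with `q` in `ℙ`. -/
def QPar (𝕄 : GBModel) (F : ClassForcing 𝕄) (Q : ZFSet) (q : ZFSet) : Set ZFSet :=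
  {r | r ∈ Q ∧ Compat F.P F.le r q}

/-- The property `(*)(A, q, ℚ)`: for every `a ∈ A`, the set of `r ∈ ℚ^{∥q}` such that either
all `s ≤ q, r` satisfy `s ≤* a`, or all `s ≤ q, r` satisfy `s ⊥ a`, is dense in `ℚ^{∥q}`. -/
def StarProp (𝕄 : GBModel) (F : ClassForcing 𝕄) (A q Q : ZFSet) : Prop :=
  ∀ a : ZFSet, a ∈ A → ∀ r₀ ∈ QPar 𝕄 F Q q, ∃ r₁ ∈ QPar 𝕄 F Q q, F.le r₁ r₀ ∧
    ((∀ s ∈ F.P, F.le s q → F.le s r₁ → leStar F.P F.le s a) ∨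
      (∀ s ∈ F.P, F.le s q → F.le s r₁ → ¬ Compat F.P F.le s a))

/-- The set reduction property. -/
def SetReductionProperty (𝕄 : GBModel) (F : ClassForcing 𝕄) : Prop :=
  ∀ A : ZFSet, A ∈ 𝕄.M → (∀ a : ZFSet, a ∈ A → a ∈ F.P) →
    ∀ p ∈ F.P, ∃ q ∈ F.P, F.le q p ∧ ∃ Q : ZFSet, IsCompleteSub 𝕄 F Q ∧ StarProp 𝕄 F A q Q

/-- Every new set added by `ℙ` is added by a set-sized complete subforcing of `ℙ`. -/
def EveryNewSetBySub (𝕄 : GBModel) (F : ClassForcing 𝕄) : Prop :=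
  ∀ G : Set ZFSet, IsGeneric 𝕄 F.P F.le G →
    ∀ x : ZFSet, x ∈ MGen 𝕄 F.P G → x ∉ 𝕄.M →
      ∃ Q : ZFSet, IsCompleteSub 𝕄 F Q ∧ x ∈ MGen 𝕄 Q.toSet (G ∩ Q.toSet)

/-! ### The q-reduction of a name -/

/-- First component of a Kuratowski pair (junk value `∅` otherwise). -/
def fstZ (x : ZFSet) : ZFSet :=
  if h : ∃ a b : ZFSet, x = a.pair b then h.choose else ∅

/-- Second component of a Kuratowski pair (junk value `∅` otherwise). -/
def sndZ (x : ZFSet) : ZFSet :=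
  if h : ∃ a b : ZFSet, x = a.pair b then h.choose_spec.choose else ∅

/-- Cartesian product of two `ZFSet`s. -/
def zprod (a b : ZFSet) : ZFSet :=
  ZFSet.sep (fun x => ∃ u v : ZFSet, u ∈ a ∧ v ∈ b ∧ x = u.pair v)
    (ZFSet.powerset (ZFSet.powerset (a ∪ b)))

/-- Auxiliary rank-bounded version of the `q`-reduction of a name to `Q`. -/
def reduceAux (S : Set ZFSet) (le : ZFSet → ZFSet → Prop) (Q q : ZFSet) (o : Ordinal)
    (σ : ZFSet) : ZFSet :=
  zimage
    (fun x =>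
      (if h : (fstZ x).rank < o then reduceAux S le Q q (fstZ x).rank (fstZ x) else ∅).pair
        (sndZ x))
    (ZFSet.sep
      (fun x => ∃ τ r : ZFSet, x = τ.pair r ∧ r ∈ Q ∧
        ∃ a : ZFSet, τ.pair a ∈ σ ∧ ∀ s ∈ S, le s q → le s r → leStar S le s a)
      (zprod (⋃₀ ⋃₀ σ) Q))
termination_by o
decreasing_by exact h

/-- The `q`-reduction `σ_q^ℚ = {⟨τ_q^ℚ, r⟩ | r ∈ ℚ ∧ ∃a (⟨τ,a⟩ ∈ σ ∧ ∀ s ≤ q,r (s ≤* a))}`. -/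
def reduceName (S : Set ZFSet) (le : ZFSet → ZFSet → Prop) (Q q σ : ZFSet) : ZFSet :=
  reduceAux S le Q q σ.rank σ

/-! ### Projections -/

/-- `f` is a projection from `⟨S, le⟩` (with maximum `one`) onto the subforcing with domain
`Qs`, respecting `X`. -/
def IsProjectionResp (S : Set ZFSet) (le : ZFSet → ZFSet → Prop) (one : ZFSet)
    (Qs X : Set ZFSet) (f : ZFSet → ZFSet) : Prop :=
  (∀ p ∈ S, f p ∈ Qs) ∧
  f one = one ∧
  (∀ p ∈ S, ∀ q ∈ S, le p q → le (f p) (f q)) ∧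
  (∀ p ∈ S, ∀ q ∈ Qs, le q (f p) → ∃ r ∈ S, le r p ∧ le (f r) q) ∧
  (∀ p ∈ X, ∀ q ∈ S, le (f q) p → le q p) ∧
  (∀ p ∈ X, f p = p)

/-- `ℙ` is approachable by projections: there is a class `Π ∈ 𝒞` whose sections `π_{X,y}`
are such that for every set `X ⊆ ℙ` there are a set `y` and a set-sized subforcing `ℚ ⊇ X ∪ {𝟙}`
of `ℙ` with `π_{X,y} : ℙ → ℚ` a projection respecting `X`. -/
def ApproachableByProjections (𝕄 : GBModel) (F : ClassForcing 𝕄) : Prop :=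
  ∃ Pi ∈ 𝕄.Cls, ∀ X : ZFSet, X ∈ 𝕄.M → (∀ x : ZFSet, x ∈ X → x ∈ F.P) →
    ∃ y ∈ 𝕄.M, ∃ Q : ZFSet, Q ∈ 𝕄.M ∧ Q.toSet ⊆ F.P ∧ (∀ x : ZFSet, x ∈ X → x ∈ Q) ∧
      F.one ∈ Q ∧ ∃ f : ZFSet → ZFSet,
        (∀ u ∈ F.P, ∀ v : ZFSet, (f u = v ↔ X.pair (y.pair (u.pair v)) ∈ Pi)) ∧
        IsProjectionResp F.P F.le F.one Q.toSet X.toSet f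

/-- `p ⊩ σ ⊆ τ` for the forcing with domain `S` and ordering `le`. -/
def ForcesSubset (𝕄 : GBModel) (S : Set ZFSet) (le : ZFSet → ZFSet → Prop)
    (p σ τ : ZFSet) : Prop :=
  ∀ G : Set ZFSet, IsGeneric 𝕄 S le G → p ∈ G → nameEval G σ ⊆ nameEval G τ

/-! ### Bounded names, turning proper classes into sets -/

/-- The possible values of the name `σ` in generic extensions. -/
def PossibleValues (𝕄 : GBModel) (S : Set ZFSet) (le : ZFSet → ZFSet → Prop)
    (σ : ZFSet) : Set ZFSet :=
  {x | ∃ G : Set ZFSet, IsGeneric 𝕄 S le G ∧ nameEval G σ = x}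

/-- The name `σ` is bounded: some `A ∈ M` covers all its possible values lying in `M`. -/
def IsBoundedName (𝕄 : GBModel) (F : ClassForcing 𝕄) (σ : ZFSet) : Prop :=
  ∃ A ∈ 𝕄.M, PossibleValues 𝕄 F.P F.le σ ∩ 𝕄.M ⊆ A.toSet

/-- `ℙ` has bounded names: every `ℙ`-name in `M` is bounded. -/
def HasBoundedNames (𝕄 : GBModel) (F : ClassForcing 𝕄) : Prop :=
  ∀ σ : ZFSet, σ ∈ 𝕄.M → IsName F.P σ → IsBoundedName 𝕄 F σ

/-- `X` is a proper class of `𝕄`: a class of `𝕄` that is not (the extension of) a set of `𝕄`. -/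
def IsProperClass (𝕄 : GBModel) (X : Set ZFSet) : Prop :=
  X ∈ 𝕄.Cls ∧ ¬ ∃ x ∈ 𝕄.M, x.toSet = X

/-- The proper class `X` of `𝕄` is turned into a set by forcing with `ℙ`: some `ℙ`-name in `M`
evaluates to `X` under some generic filter. -/
def TurnsIntoSet (𝕄 : GBModel) (F : ClassForcing 𝕄) (X : Set ZFSet) : Prop :=
  ∃ σ : ZFSet, σ ∈ 𝕄.M ∧ IsName F.P σ ∧
    ∃ G : Set ZFSet, IsGeneric 𝕄 F.P F.le G ∧ (nameEval G σ).toSet = X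

/-! ### Functions and partial functions as sets, collapse forcings -/

/-- `p` is a partial function from (a subset of) `γ` into the class `Y`. -/
def IsPFunOn (p γ : ZFSet) (Y : Set ZFSet) : Prop :=
  (∀ x : ZFSet, x ∈ p → ∃ a b : ZFSet, x = a.pair b ∧ a ∈ γ ∧ b ∈ Y) ∧
  ∀ a b b' : ZFSet, a.pair b ∈ p → a.pair b' ∈ p → b = b'

/-- The domain of a set of pairs. -/
def pdom (p : ZFSet) : Set ZFSet := {a | ∃ b : ZFSet, a.pair b ∈ p}

/-- `f` is (the graph of) an injective function from `X` into `Y`. -/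
def ZInjFun (f : ZFSet) (X Y : Set ZFSet) : Prop :=
  (∀ x : ZFSet, x ∈ f → ∃ a b : ZFSet, x = a.pair b ∧ a ∈ X ∧ b ∈ Y) ∧
  (∀ a b b' : ZFSet, a.pair b ∈ f → a.pair b' ∈ f → b = b') ∧
  (∀ a ∈ X, ∃ b : ZFSet, a.pair b ∈ f) ∧
  (∀ a a' b : ZFSet, a.pair b ∈ f → a'.pair b ∈ f → a = a')

/-- `D` has size less than the cardinality of `γ` in the sense of `M`:
no function of `M` injects `γ` into `D`. -/
def SmallerThan (𝕄 : GBModel) (γ : ZFSet) (D : Set ZFSet) : Prop :=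
  ¬ ∃ f ∈ 𝕄.M, ZInjFun f γ.toSet D

/-- Conditions of `Col(γ, Y)^M`: partial functions of `M` from `γ` to `Y` whose domain has
size less than the cardinality of `γ` in `M`. -/
def ColCond (𝕄 : GBModel) (γ : ZFSet) (Y : Set ZFSet) (p : ZFSet) : Prop :=
  p ∈ 𝕄.M ∧ IsPFunOn p γ Y ∧ SmallerThan 𝕄 γ (pdom p)

/-- Conditions of `Col₋*(γ, Y)^M`: those conditions of `Col(γ, Y)^M` whose domain is
an ordinal. -/
def ColStarCond (𝕄 : GBModel) (γ : ZFSet) (Y : Set ZFSet) (p : ZFSet) : Prop :=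
  ColCond 𝕄 γ Y p ∧ ∃ β : ZFSet, β.IsOrdinal ∧ pdom p = β.toSet

/-- `f` is (the graph of) a function with domain `I`. -/
def ZFuncOn (f I : ZFSet) : Prop :=
  (∀ x : ZFSet, x ∈ f → ∃ a b : ZFSet, x = a.pair b ∧ a ∈ I) ∧
  (∀ a b b' : ZFSet, a.pair b ∈ f → a.pair b' ∈ f → b = b') ∧
  (∀ a : ZFSet, a ∈ I → ∃ b : ZFSet, a.pair b ∈ f)

/-- Application of a set-function to an argument (junk value `∅` if undefined). -/
def zapp (f i : ZFSet) : ZFSet :=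
  if h : ∃ b : ZFSet, i.pair b ∈ f then h.choose else ∅

/-! ### Pretameness -/

/-- `ℙ` is pretame for `𝕄`: for every `p ∈ ℙ`, `I ∈ M` and every `𝒞`-coded sequence
`⟨D_i | i ∈ I⟩` (coded as the class of pairs `⟨i, x⟩` with `x ∈ D_i`) of dense subclasses
of `ℙ`, there are `q ≤ p` and `⟨d_i | i ∈ I⟩ ∈ M` with `d_i ⊆ D_i` predense below `q`. -/
def Pretame (𝕄 : GBModel) (F : ClassForcing 𝕄) : Prop :=
  ∀ p ∈ F.P, ∀ I : ZFSet, I ∈ 𝕄.M → ∀ D ∈ 𝕄.Cls,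
    (∀ i : ZFSet, i ∈ I →
      (∀ x : ZFSet, i.pair x ∈ D → x ∈ F.P) ∧ ∀ r ∈ F.P, ∃ s : ZFSet, i.pair s ∈ D ∧ F.le s r) →
    ∃ q ∈ F.P, F.le q p ∧ ∃ d ∈ 𝕄.M, ZFuncOn d I ∧
      ∀ i : ZFSet, i ∈ I → (∀ x : ZFSet, x ∈ zapp d i → i.pair x ∈ D) ∧
        ∀ r ∈ F.P, F.le r q → ∃ a : ZFSet, a ∈ zapp d i ∧ Compat F.P F.le r a

/-! ### The specific forcings of Sections 6 and 7 -/

/-- Conditions of Definition 6.8: (not necessarily finite) partial functions from `ω` to `2`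
lying in `M`. -/
def PCond (𝕄 : GBModel) (p : ZFSet) : Prop :=
  p ∈ 𝕄.M ∧ IsPFunOn p ZFSet.omega {x : ZFSet | x = ∅ ∨ x = ({∅} : ZFSet)}

/-- Conditions of the finite support product `ℚ` of `ω` many copies of `ℙ`:
finite sequences `⟨p₀, …, p_k⟩` of `ℙ`-conditions. -/
def QCond (𝕄 : GBModel) (s : ZFSet) : Prop :=
  s ∈ 𝕄.M ∧ ∃ n : ZFSet, n ∈ ZFSet.omega ∧ ZFuncOn s n ∧
    ∀ i : ZFSet, i ∈ n → PCond 𝕄 (zapp s i)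

/-- The coordinatewise ordering on `ℚ`. -/
def QLe (s' s : ZFSet) : Prop :=
  pdom s ⊆ pdom s' ∧ ∀ i ∈ pdom s, zapp s i ⊆ zapp s' i

/-- The power class `𝒫(ω)^M`. -/
def PowOmega (𝕄 : GBModel) : Set ZFSet :=
  {x : ZFSet | x ∈ 𝕄.M ∧ x ⊆ ZFSet.omega}

/-- `X ⊆ M` is definable over `⟨M, ∈⟩` (from set parameters). -/
def DefinableOver (Mset : Set ZFSet) (X : Set ZFSet) : Prop :=
  ∃ (φ : EFormula) (v : ℕ → ZFSet), (∀ n, v n ∈ Mset) ∧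
    X = {x : ZFSet | x ∈ Mset ∧ EFormula.Sat Mset (Function.update v 0 x) φ}

/-- Every set of `M` is countable in `M`: it injects into `ω` by a function of `M`. -/
def AllSetsCountable (𝕄 : GBModel) : Prop :=
  ∀ x ∈ 𝕄.M, ∃ f ∈ 𝕄.M, ZInjFun f x.toSet ZFSet.omega.toSet


/-! ## Definability calculus -/

universe u

/-- Renaming of class parameters. -/
def GBFormula.mapC (g : ℕ → ℕ) : GBFormula → GBFormula
  | .mem i j => .mem i j
  | .eq i j => .eq i j
  | .cls i j => .cls i (g j)
  | .not φ => .not (GBFormula.mapC g φ)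
  | .or φ ψ => .or (GBFormula.mapC g φ) (GBFormula.mapC g ψ)
  | .ex i φ => .ex i (GBFormula.mapC g φ)

theorem sat_mapC (M : Set ZFSet.{u}) (Cs : ℕ → Set ZFSet.{u}) (g : ℕ → ℕ) (φ : GBFormula) :
    ∀ v, GBFormula.Sat M Cs v (φ.mapC g) ↔ GBFormula.Sat M (fun i => Cs (g i)) v φ := by
  induction φ with
  | mem i j => intro v; rfl
  | eq i j => intro v; rfl
  | cls i j => intro v; rfl
  | not φ ih => intro v; simp only [GBFormula.mapC, GBFormula.Sat, ih]
  | or φ ψ ih1 ih2 => intro v; simp only [GBFormula.mapC, GBFormula.Sat, ih1, ih2]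
  | ex i φ ih => intro v; simp only [GBFormula.mapC, GBFormula.Sat, ih]

/-- A relation on assignments which is first-order definable with class parameters. -/
def Dfn (𝕄 : GBModel.{u}) (n : ℕ) (R : (Fin n → ZFSet.{u}) → Prop) : Prop :=
  ∀ (m : ℕ) (f : Fin n → Fin m), ∃ (φ : GBFormula) (Cs : ℕ → Set ZFSet.{u}),
    (∀ i, Cs i ∈ 𝕄.Cls) ∧ ∀ v : ℕ → ZFSet.{u}, (∀ i, v i ∈ 𝕄.M) →
      (GBFormula.Sat 𝕄.M Cs v φ ↔ R (fun i => v (f i)))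

/-- Definable terms. -/
def Tm (𝕄 : GBModel.{u}) (n : ℕ) (t : (Fin n → ZFSet.{u}) → ZFSet.{u}) : Prop :=
  (∀ v, (∀ i, v i ∈ 𝕄.M) → t v ∈ 𝕄.M) ∧
    Dfn 𝕄 (n + 1) (fun w => w (Fin.last n) = t (fun i => w i.castSucc))

section calculus

variable {𝕄 : GBModel.{u}} {n : ℕ}

theorem empty_cls (𝕄 : GBModel.{u}) : (∅ : ZFSet.{u}).toSet ∈ 𝕄.Cls :=
  𝕄.sets_are_classes _ 𝕄.empty_mem

theorem Dfn.congr {R R' : (Fin n → ZFSet.{u}) → Prop} (h : Dfn 𝕄 n R)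
    (e : ∀ v, (∀ i, v i ∈ 𝕄.M) → (R v ↔ R' v)) : Dfn 𝕄 n R' := by
  intro m f
  obtain ⟨φ, Cs, hC, h⟩ := h m f
  exact ⟨φ, Cs, hC, fun v hv => (h v hv).trans (e _ fun i => hv _)⟩

theorem Dfn.rename {k : ℕ} {R : (Fin n → ZFSet.{u}) → Prop} (h : Dfn 𝕄 n R)
    (g : Fin n → Fin k) : Dfn 𝕄 k (fun v => R (fun i => v (g i))) := by
  intro m f
  exact h m (fun i => f (g i))

theorem Dfn.not {R : (Fin n → ZFSet.{u}) → Prop} (h : Dfn 𝕄 n R) :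
    Dfn 𝕄 n (fun v => ¬ R v) := by
  intro m f
  obtain ⟨φ, Cs, hC, h⟩ := h m f
  exact ⟨.not φ, Cs, hC, fun v hv => not_congr (h v hv)⟩

theorem Dfn.or {R S : (Fin n → ZFSet.{u}) → Prop} (h : Dfn 𝕄 n R) (h' : Dfn 𝕄 n S) :
    Dfn 𝕄 n (fun v => R v ∨ S v) := by
  intro m f
  obtain ⟨φ, Cs, hC, h⟩ := h m f
  obtain ⟨ψ, Ds, hD, h'⟩ := h' m f
  refine ⟨.or (φ.mapC (fun i => 2 * i)) (ψ.mapC (fun i => 2 * i + 1)),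
    fun i => if i % 2 = 0 then Cs (i / 2) else Ds (i / 2), ?_, ?_⟩
  · intro i
    dsimp only
    split_ifs
    · exact hC _
    · exact hD _
  · intro v hv
    have e1 : ∀ i, (2 * i) % 2 = 0 := by omega
    have e2 : ∀ i, (2 * i) / 2 = i := by omega
    have e3 : ∀ i, ¬ ((2 * i + 1) % 2 = 0) := by omega
    have e4 : ∀ i, (2 * i + 1) / 2 = i := by omega
    simp only [GBFormula.Sat, sat_mapC]
    simp only [e1, e2, e3, e4, if_true, if_false]
    exact or_congr (h v hv) (h' v hv)

theorem Dfn.and {R S : (Fin n → ZFSet.{u}) → Prop} (h : Dfn 𝕄 n R) (h' : Dfn 𝕄 n S) :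
    Dfn 𝕄 n (fun v => R v ∧ S v) :=
  (h.not.or h'.not).not.congr (fun v _ => by tauto)

theorem Dfn.imp {R S : (Fin n → ZFSet.{u}) → Prop} (h : Dfn 𝕄 n R) (h' : Dfn 𝕄 n S) :
    Dfn 𝕄 n (fun v => R v → S v) :=
  (h.not.or h').congr (fun v _ => by tauto)

theorem Dfn.iff {R S : (Fin n → ZFSet.{u}) → Prop} (h : Dfn 𝕄 n R) (h' : Dfn 𝕄 n S) :
    Dfn 𝕄 n (fun v => (R v ↔ S v)) :=
  ((h.imp h').and (h'.imp h)).congr (fun v _ => by tauto)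

theorem Dfn.ex {R : (Fin n → ZFSet.{u}) → ZFSet.{u} → Prop}
    (h : Dfn 𝕄 (n + 1) (fun w => R (fun i => w i.castSucc) (w (Fin.last n)))) :
    Dfn 𝕄 n (fun v => ∃ x ∈ 𝕄.M, R v x) := by
  intro m f
  obtain ⟨φ, Cs, hC, h⟩ := h (m + 1) (Fin.snoc (fun i => (f i).castSucc) (Fin.last m))
  refine ⟨.ex m φ, Cs, hC, fun v hv => ?_⟩
  simp only [GBFormula.Sat]
  refine exists_congr fun x => and_congr_right fun hx => ?_
  rw [h]
  · have : (fun i : Fin n => Function.update v m x (f i)) = fun i => v (f i) := by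
      funext i
      exact Function.update_of_ne (f i).2.ne _ _
    simp [this]
  · intro i
    by_cases hi : i = m
    · subst hi; simpa using hx
    · simpa [hi] using hv i

theorem Dfn.all {R : (Fin n → ZFSet.{u}) → ZFSet.{u} → Prop}
    (h : Dfn 𝕄 (n + 1) (fun w => R (fun i => w i.castSucc) (w (Fin.last n)))) :
    Dfn 𝕄 n (fun v => ∀ x ∈ 𝕄.M, R v x) := by
  have := (Dfn.ex (R := fun v x => ¬ R v x) h.not).not
  exact this.congr (fun v _ => by simp)

theorem Dfn.var_mem (i j : Fin n) : Dfn 𝕄 n (fun v => v i ∈ v j) := fun _ f =>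
  ⟨.mem (f i) (f j), fun _ => (∅ : ZFSet).toSet, fun _ => empty_cls 𝕄, fun _ _ => Iff.rfl⟩

theorem Dfn.var_eq (i j : Fin n) : Dfn 𝕄 n (fun v => v i = v j) := fun _ f =>
  ⟨.eq (f i) (f j), fun _ => (∅ : ZFSet).toSet, fun _ => empty_cls 𝕄, fun _ _ => Iff.rfl⟩

theorem Dfn.var_cls (i : Fin n) {C : Set ZFSet.{u}} (hC : C ∈ 𝕄.Cls) :
    Dfn 𝕄 n (fun v => v i ∈ C) := fun _ f =>
  ⟨.cls (f i) 0, fun _ => C, fun _ => hC, fun _ _ => Iff.rfl⟩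

theorem Tm.var (i : Fin n) : Tm 𝕄 n (fun v => v i) :=
  ⟨fun _ hv => hv i, Dfn.var_eq _ _⟩

theorem Tm.wk {t : (Fin n → ZFSet.{u}) → ZFSet.{u}} (h : Tm 𝕄 n t) :
    Tm 𝕄 (n + 1) (fun w => t (fun i => w i.castSucc)) := by
  refine ⟨fun v hv => h.1 _ fun i => hv _, ?_⟩
  have := h.2.rename (Fin.snoc (fun i => i.castSucc.castSucc) (Fin.last (n + 1)))
  simpa using this

/-- Substituting a term. -/
theorem Dfn.subst {R : (Fin n → ZFSet.{u}) → ZFSet.{u} → Prop}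
    {t : (Fin n → ZFSet.{u}) → ZFSet.{u}} (ht : Tm 𝕄 n t)
    (h : Dfn 𝕄 (n + 1) (fun w => R (fun i => w i.castSucc) (w (Fin.last n)))) :
    Dfn 𝕄 n (fun v => R v (t v)) := by
  refine (Dfn.ex (R := fun v x => x = t v ∧ R v x) (ht.2.and h)).congr fun v hv => ?_
  constructor
  · rintro ⟨x, _, rfl, h⟩; exact h
  · exact fun h => ⟨_, ht.1 v hv, rfl, h⟩

theorem Dfn.cls {t : (Fin n → ZFSet.{u}) → ZFSet.{u}} (ht : Tm 𝕄 n t)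
    {C : Set ZFSet.{u}} (hC : C ∈ 𝕄.Cls) : Dfn 𝕄 n (fun v => t v ∈ C) :=
  Dfn.subst (R := fun _ x => x ∈ C) ht (Dfn.var_cls _ hC)

theorem Dfn.mem {s t : (Fin n → ZFSet.{u}) → ZFSet.{u}} (hs : Tm 𝕄 n s) (ht : Tm 𝕄 n t) :
    Dfn 𝕄 n (fun v => s v ∈ t v) :=
  Dfn.subst (R := fun v x => x ∈ t v) hs <|
    Dfn.subst (R := fun w y => w (Fin.last n) ∈ y) ht.wk <| Dfn.var_mem _ _

theorem Dfn.eq {s t : (Fin n → ZFSet.{u}) → ZFSet.{u}} (hs : Tm 𝕄 n s) (ht : Tm 𝕄 n t) :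
    Dfn 𝕄 n (fun v => s v = t v) :=
  Dfn.subst (R := fun v x => x = t v) hs ht.2

theorem Tm.const {a : ZFSet.{u}} (ha : a ∈ 𝕄.M) : Tm 𝕄 n (fun _ => a) := by
  refine ⟨fun _ _ => ha, ?_⟩
  have : Dfn 𝕄 (n + 1) (fun w => ∀ z ∈ 𝕄.M, (z ∈ w (Fin.last n) ↔ z ∈ a.toSet)) :=
    Dfn.all ((Dfn.mem (Tm.var _) (Tm.var _)).iff (Dfn.cls (Tm.var _) (𝕄.sets_are_classes a ha)))
  refine this.congr fun v hv => ?_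
  constructor
  · intro h
    ext z
    constructor
    · intro hz; exact (h z (𝕄.transitive _ (hv _) _ hz)).1 hz
    · intro hz; exact (h z (𝕄.transitive _ ha _ hz)).2 hz
  · rintro h z -
    rw [h]; rfl

/-! closure of `M` -/

theorem sing_mem {a : ZFSet.{u}} (ha : a ∈ 𝕄.M) : ({a} : ZFSet) ∈ 𝕄.M := by
  rw [← ZFSet.pair_eq_singleton]; exact 𝕄.pair_mem a ha a ha

theorem opair_mem {a b : ZFSet.{u}} (ha : a ∈ 𝕄.M) (hb : b ∈ 𝕄.M) : a.pair b ∈ 𝕄.M :=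
  𝕄.pair_mem _ (sing_mem ha) _ (𝕄.pair_mem _ ha _ hb)

theorem union_mem {a b : ZFSet.{u}} (ha : a ∈ 𝕄.M) (hb : b ∈ 𝕄.M) : a ∪ b ∈ 𝕄.M :=
  𝕄.sUnion_mem _ (𝕄.pair_mem a ha b hb)

theorem of_opair_mem {a b : ZFSet.{u}} (h : a.pair b ∈ 𝕄.M) : a ∈ 𝕄.M ∧ b ∈ 𝕄.M := by
  have h1 : ({a, b} : ZFSet) ∈ 𝕄.M := 𝕄.transitive _ h _ (by simp [ZFSet.pair])
  exact ⟨𝕄.transitive _ h1 _ (by simp), 𝕄.transitive _ h1 _ (by simp)⟩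

theorem of_opair_mem' {a b s : ZFSet.{u}} (hs : s ∈ 𝕄.M) (h : a.pair b ∈ s) :
    a ∈ 𝕄.M ∧ b ∈ 𝕄.M := of_opair_mem (𝕄.transitive _ hs _ h)

theorem Dfn.upair_eq {r s t : (Fin n → ZFSet.{u}) → ZFSet.{u}} (hr : Tm 𝕄 n r)
    (hs : Tm 𝕄 n s) (ht : Tm 𝕄 n t) :
    Dfn 𝕄 n (fun v => r v = ({s v, t v} : ZFSet)) := by
  have : Dfn 𝕄 n (fun v => ∀ z ∈ 𝕄.M, (z ∈ r v ↔ (z = s v ∨ z = t v))) :=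
    Dfn.all ((Dfn.mem (Tm.var _) hr.wk).iff
      ((Dfn.eq (Tm.var _) hs.wk).or (Dfn.eq (Tm.var _) ht.wk)))
  refine this.congr fun v hv => ?_
  constructor
  · intro h
    ext z
    rw [ZFSet.mem_pair]
    constructor
    · intro hz; exact (h z (𝕄.transitive _ (hr.1 v hv) _ hz)).1 hz
    · intro hz
      refine (h z ?_).2 hz
      rcases hz with rfl | rfl
      · exact hs.1 v hv
      · exact ht.1 v hv
  · intro h z _
    rw [h, ZFSet.mem_pair]

theorem Tm.upair {s t : (Fin n → ZFSet.{u}) → ZFSet.{u}}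
    (hs : Tm 𝕄 n s) (ht : Tm 𝕄 n t) : Tm 𝕄 n (fun v => ({s v, t v} : ZFSet)) :=
  ⟨fun v hv => 𝕄.pair_mem _ (hs.1 v hv) _ (ht.1 v hv), Dfn.upair_eq (Tm.var _) hs.wk ht.wk⟩

theorem Tm.pair {s t : (Fin n → ZFSet.{u}) → ZFSet.{u}}
    (hs : Tm 𝕄 n s) (ht : Tm 𝕄 n t) : Tm 𝕄 n (fun v => (s v).pair (t v)) := by
  have := (hs.upair hs).upair (hs.upair ht)
  simpa [ZFSet.pair, ZFSet.pair_eq_singleton] using this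

theorem Tm.fst {t : (Fin n → ZFSet.{u}) → ZFSet.{u}} (ht : Tm 𝕄 n t) :
    Tm 𝕄 n (fun v => fstZ (t v)) ∧ Tm 𝕄 n (fun v => sndZ (t v)) := by
  have key : ∀ x : ZFSet.{u}, (∃ a b : ZFSet.{u}, x = a.pair b) → x = (fstZ x).pair (sndZ x) := by
    intro x h
    have := h.choose_spec.choose_spec
    simp only [fstZ, sndZ, h, dif_pos]
    exact this
  have hp : ∀ v, (∀ i, v i ∈ 𝕄.M) → ((∃ a ∈ 𝕄.M, ∃ b ∈ 𝕄.M, t v = a.pair b) ↔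
      ∃ a b : ZFSet.{u}, t v = a.pair b) := by
    intro v hv
    constructor
    · rintro ⟨a, _, b, _, h⟩; exact ⟨a, b, h⟩
    · rintro ⟨a, b, h⟩
      have := of_opair_mem (𝕄 := 𝕄) (h ▸ ht.1 v hv)
      exact ⟨a, this.1, b, this.2, h⟩
  have D0 : Dfn 𝕄 (n + 1) (fun w => ∃ a ∈ 𝕄.M, ∃ b ∈ 𝕄.M,
      t (fun i => w i.castSucc) = a.pair b) :=
    Dfn.ex (Dfn.ex (Dfn.eq ht.wk.wk.wk (Tm.pair (Tm.var _) (Tm.var _))))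
  have D1 : Dfn 𝕄 (n + 1) (fun w => w (Fin.last n) = ∅) :=
    Dfn.eq (Tm.var _) (Tm.const 𝕄.empty_mem)
  refine ⟨⟨fun v hv => ?_, ?_⟩, ⟨fun v hv => ?_, ?_⟩⟩
  · by_cases h : ∃ a b : ZFSet.{u}, t v = a.pair b
    · have := key _ h
      exact (of_opair_mem (𝕄 := 𝕄) (this ▸ ht.1 v hv)).1
    · simp only [fstZ, h, dif_neg, not_false_eq_true]; exact 𝕄.empty_mem
  · have D2 : Dfn 𝕄 (n + 1) (fun w => ∃ b ∈ 𝕄.M,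
        t (fun i => w i.castSucc) = (w (Fin.last n)).pair b) :=
      Dfn.ex (Dfn.eq ht.wk.wk (Tm.pair (Tm.var _) (Tm.var _)))
    refine (D2.or (D0.not.and D1)).congr fun w hw => ?_
    rw [hp _ (fun i => hw _)]
    by_cases h : ∃ a b : ZFSet.{u}, t (fun i => w i.castSucc) = a.pair b
    · have e := key _ h
      simp only [h, not_true_eq_false, false_and, or_false]
      constructor
      · rintro ⟨b, _, hb⟩
        rw [e] at hb
        exact (ZFSet.pair_inj.1 hb).1.symm
      · intro h'
        refine ⟨_, (of_opair_mem (𝕄 := 𝕄) (e ▸ ht.1 _ fun i => hw _)).2, ?_⟩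
        rw [h']; exact e
    · have : fstZ (t (fun i => w i.castSucc)) = ∅ := by
        simp only [fstZ, h, dif_neg, not_false_eq_true]
      simp only [this]
      constructor
      · rintro (⟨b, _, hb⟩ | h')
        · exact absurd ⟨_, _, hb⟩ h
        · exact h'.2
      · exact fun h' => Or.inr ⟨h, h'⟩
  · by_cases h : ∃ a b : ZFSet.{u}, t v = a.pair b
    · have := key _ h
      exact (of_opair_mem (𝕄 := 𝕄) (this ▸ ht.1 v hv)).2
    · simp only [sndZ, h, dif_neg, not_false_eq_true]; exact 𝕄.empty_mem
  · have D2 : Dfn 𝕄 (n + 1) (fun w => ∃ b ∈ 𝕄.M,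
        t (fun i => w i.castSucc) = b.pair (w (Fin.last n))) :=
      Dfn.ex (Dfn.eq ht.wk.wk (Tm.pair (Tm.var _) (Tm.var _)))
    refine (D2.or (D0.not.and D1)).congr fun w hw => ?_
    rw [hp _ (fun i => hw _)]
    by_cases h : ∃ a b : ZFSet.{u}, t (fun i => w i.castSucc) = a.pair b
    · have e := key _ h
      simp only [h, not_true_eq_false, false_and, or_false]
      constructor
      · rintro ⟨b, _, hb⟩
        rw [e] at hb
        exact (ZFSet.pair_inj.1 hb).2.symm
      · intro h'
        refine ⟨_, (of_opair_mem (𝕄 := 𝕄) (e ▸ ht.1 _ fun i => hw _)).1, ?_⟩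
        rw [h']; exact e
    · have : sndZ (t (fun i => w i.castSucc)) = ∅ := by
        simp only [sndZ, h, dif_neg, not_false_eq_true]
      simp only [this]
      constructor
      · rintro (⟨b, _, hb⟩ | h')
        · exact absurd ⟨_, _, hb⟩ h
        · exact h'.2
      · exact fun h' => Or.inr ⟨h, h'⟩

theorem fstZ_pair (a b : ZFSet.{u}) : fstZ (a.pair b) = a := by
  have h : ∃ c d : ZFSet.{u}, a.pair b = c.pair d := ⟨a, b, rfl⟩
  simp only [fstZ, h, dif_pos]
  exact (ZFSet.pair_inj.1 h.choose_spec.choose_spec).1.symm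

theorem sndZ_pair (a b : ZFSet.{u}) : sndZ (a.pair b) = b := by
  have h : ∃ c d : ZFSet.{u}, a.pair b = c.pair d := ⟨a, b, rfl⟩
  simp only [sndZ, h, dif_pos]
  exact (ZFSet.pair_inj.1 h.choose_spec.choose_spec).2.symm

theorem Dfn.triv (b : Prop) : Dfn 𝕄 n (fun _ => b) := by
  have h : Dfn 𝕄 n (fun _ => (∅ : ZFSet) = ∅) :=
    Dfn.eq (Tm.const 𝕄.empty_mem) (Tm.const 𝕄.empty_mem)
  by_cases hb : b
  · exact h.congr fun v _ => by simp [hb]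
  · exact h.not.congr fun v _ => by simp [hb]

theorem Dfn.allFin {m : ℕ} {R : Fin m → (Fin n → ZFSet.{u}) → Prop}
    (h : ∀ i, Dfn 𝕄 n (R i)) : Dfn 𝕄 n (fun v => ∀ i, R i v) := by
  induction m with
  | zero => exact (Dfn.triv True).congr fun v _ => by simp
  | succ m ih =>
    refine ((h 0).and (ih (R := fun i => R i.succ) fun i => h _)).congr fun v _ => ?_
    rw [Fin.forall_fin_succ]

theorem Tm.listEncode {m : ℕ} {t : Fin m → (Fin n → ZFSet.{u}) → ZFSet.{u}}
    (h : ∀ i, Tm 𝕄 n (t i)) : Tm 𝕄 n (fun v => CF.listEncode (List.ofFn fun i => t i v)) := by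
  induction m with
  | zero =>
    simp only [List.ofFn_zero, CF.listEncode]
    exact Tm.const 𝕄.empty_mem
  | succ m ih =>
    simp only [List.ofFn_succ, CF.listEncode]
    exact (h 0).pair (ih (t := fun i => t i.succ) fun i => h _)

/-- Extension of a finite assignment by `∅`. -/
def extA {m : ℕ} (x : Fin m → ZFSet.{u}) : ℕ → ZFSet.{u} :=
  fun k => if h : k < m then x ⟨k, h⟩ else ∅

theorem Dfn.sat {m : ℕ} (φ : EFormula) (hφ : φ.VarsLt m) :
    ∀ (n : ℕ) (t : Fin m → (Fin n → ZFSet.{u}) → ZFSet.{u}), (∀ i, Tm 𝕄 n (t i)) →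
      Dfn 𝕄 n (fun v => EFormula.Sat 𝕄.M (extA fun i => t i v) φ) := by
  induction φ with
  | mem i j =>
    intro n t ht
    have := Dfn.mem (ht ⟨i, hφ.1⟩) (ht ⟨j, hφ.2⟩)
    simpa [EFormula.Sat, extA, hφ.1, hφ.2] using this
  | eq i j =>
    intro n t ht
    have := Dfn.eq (ht ⟨i, hφ.1⟩) (ht ⟨j, hφ.2⟩)
    simpa [EFormula.Sat, extA, hφ.1, hφ.2] using this
  | not φ ih => intro n t ht; exact (ih hφ n t ht).not
  | or φ ψ ih1 ih2 => intro n t ht; exact (ih1 hφ.1 n t ht).or (ih2 hφ.2 n t ht)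
  | ex i φ ih =>
    intro n t ht
    simp only [EFormula.Sat]
    refine Dfn.ex ?_
    refine (ih hφ.2 (n + 1) (fun j w => if (j : ℕ) = i then w (Fin.last n)
      else t j (fun k => w k.castSucc)) ?_).congr ?_
    · intro j
      by_cases hj : (j : ℕ) = i
      · simp only [hj, if_true]; exact Tm.var _
      · simp only [hj, if_false]; exact (ht j).wk
    · intro w _
      have : (extA fun j : Fin m => if (j : ℕ) = i then w (Fin.last n)
          else t j (fun k => w k.castSucc)) =
          Function.update (extA fun j => t j (fun k => w k.castSucc)) i (w (Fin.last n)) := by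
        funext k
        by_cases hk : k = i
        · subst hk; simp [extA, hφ.1]
        · simp [extA, hk]
      rw [this]

/-- Definable unary predicates. -/
def DP (𝕄 : GBModel.{u}) (R : ZFSet.{u} → Prop) : Prop :=
  ∀ (n : ℕ) (t : (Fin n → ZFSet.{u}) → ZFSet.{u}), Tm 𝕄 n t → Dfn 𝕄 n (fun v => R (t v))

/-- Definable binary relations. -/
def DR (𝕄 : GBModel.{u}) (R : ZFSet.{u} → ZFSet.{u} → Prop) : Prop :=
  ∀ (n : ℕ) (s t : (Fin n → ZFSet.{u}) → ZFSet.{u}), Tm 𝕄 n s → Tm 𝕄 n t →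
    Dfn 𝕄 n (fun v => R (s v) (t v))

theorem DP.cls {R : ZFSet.{u} → Prop} (h : DP 𝕄 R) : {x | x ∈ 𝕄.M ∧ R x} ∈ 𝕄.Cls := by
  obtain ⟨φ, Cs, hC, h⟩ := h 1 (fun v => v 0) (Tm.var 0) 1 id
  have := 𝕄.comprehension φ (fun _ => ∅) Cs (fun _ => 𝕄.empty_mem) hC
  convert this using 1
  ext x
  refine and_congr_right fun hx => ?_
  rw [h]
  · simp
  · intro i
    by_cases hi : i = 0
    · subst hi; simpa using hx
    · simpa [hi] using 𝕄.empty_mem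

theorem DP.sep {R : ZFSet.{u} → Prop} (h : DP 𝕄 R) {a : ZFSet.{u}} (ha : a ∈ 𝕄.M) :
    ∃ b ∈ 𝕄.M, ∀ x, x ∈ b ↔ x ∈ a ∧ R x := by
  obtain ⟨b, hb, h⟩ := 𝕄.separation _ h.cls a ha
  refine ⟨b, hb, fun x => (h x).trans ?_⟩
  constructor
  · rintro ⟨h1, _, h2⟩; exact ⟨h1, h2⟩
  · rintro ⟨h1, h2⟩; exact ⟨h1, 𝕄.transitive _ ha _ h1, h2⟩

theorem DR.collect {R : ZFSet.{u} → ZFSet.{u} → Prop} (h : DR 𝕄 R) {a : ZFSet.{u}}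
    (ha : a ∈ 𝕄.M) (H : ∀ x ∈ a, ∃ y ∈ 𝕄.M, R x y) :
    ∃ b ∈ 𝕄.M, (∀ x ∈ a, ∃ y ∈ b, R x y) ∧ ∀ y ∈ b, ∃ x ∈ a, R x y := by
  have h1 : DP 𝕄 (fun z => ∃ x ∈ 𝕄.M, ∃ y ∈ 𝕄.M, z = x.pair y ∧ R x y) := fun n t ht =>
    Dfn.ex (Dfn.ex ((Dfn.eq ht.wk.wk (Tm.pair (Tm.var _) (Tm.var _))).and
      (h _ _ _ (Tm.var _) (Tm.var _))))
  obtain ⟨b, hb, h2⟩ := 𝕄.collection _ h1.cls a ha (by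
    intro x hx
    obtain ⟨y, hy, hR⟩ := H x hx
    have hx' := 𝕄.transitive _ ha _ hx
    exact ⟨y, hy, opair_mem hx' hy, x, hx', y, hy, rfl, hR⟩)
  have h3 : DP 𝕄 (fun y => ∃ x ∈ 𝕄.M, x ∈ a ∧ R x y) := fun n t ht =>
    Dfn.ex ((Dfn.mem (Tm.var _) (Tm.const ha)).and (h _ _ _ (Tm.var _) ht.wk))
  obtain ⟨c, hc, h4⟩ := h3.sep hb
  refine ⟨c, hc, fun x hx => ?_, fun y hy => ?_⟩
  · obtain ⟨y, hy, _, x', hx', y', hy', e, hR⟩ := h2 x hx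
    obtain ⟨rfl, rfl⟩ := ZFSet.pair_inj.1 e
    exact ⟨y, (h4 y).2 ⟨hy, x, hx', hx, hR⟩, hR⟩
  · obtain ⟨_, x, _, hx, hR⟩ := (h4 y).1 hy
    exact ⟨x, hx, hR⟩

end calculus

/-! ## Names, evaluation, transitive sets inside the model -/

section names

variable {𝕄 : GBModel.{u}}

theorem rank_fst_lt {t p s : ZFSet.{u}} (h : t.pair p ∈ s) : t.rank < s.rank := by
  have h1 : t.rank < ({t} : ZFSet).rank := ZFSet.rank_lt_of_mem (by simp)
  have h2 : ({t} : ZFSet).rank < (t.pair p).rank := ZFSet.rank_lt_of_mem (by simp [ZFSet.pair])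
  exact (h1.trans h2).trans (ZFSet.rank_lt_of_mem h)

/-- Induction along first components. -/
theorem name_induction {p : ZFSet.{u} → Prop}
    (h : ∀ s, (∀ t q, t.pair q ∈ s → p t) → p s) (s : ZFSet.{u}) : p s := by
  have : WellFounded (fun a b : ZFSet.{u} => a.rank < b.rank) :=
    InvImage.wf ZFSet.rank wellFounded_lt
  exact this.induction s fun s ih => h s fun t q hq => ih t (rank_fst_lt hq)

theorem fst_mem_sUnion {t p s : ZFSet.{u}} (h : t.pair p ∈ s) : t ∈ (⋃₀ ⋃₀ s : ZFSet) := by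
  refine ZFSet.mem_sUnion.2 ⟨{t, p}, ZFSet.mem_sUnion.2 ⟨_, h, ?_⟩, ?_⟩ <;> simp [ZFSet.pair]

theorem snd_mem_sUnion {t p s : ZFSet.{u}} (h : t.pair p ∈ s) : p ∈ (⋃₀ ⋃₀ s : ZFSet) := by
  refine ZFSet.mem_sUnion.2 ⟨{t, p}, ZFSet.mem_sUnion.2 ⟨_, h, ?_⟩, ?_⟩ <;> simp [ZFSet.pair]

theorem mem_nameEval {G : Set ZFSet.{u}} {σ y : ZFSet.{u}} :
    y ∈ nameEval G σ ↔ ∃ t p, p ∈ G ∧ t.pair p ∈ σ ∧ y = nameEval G t := by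
  unfold nameEval
  rw [nameEvalAux, zimage, @ZFSet.mem_image _ (Classical.allZFSetDefinable _)]
  constructor
  · rintro ⟨t, ht, rfl⟩
    obtain ⟨_, p, hp, h⟩ := ZFSet.mem_sep.1 ht
    exact ⟨t, p, hp, h, by simp [rank_fst_lt h]⟩
  · rintro ⟨t, p, hp, h, rfl⟩
    exact ⟨t, ZFSet.mem_sep.2 ⟨fst_mem_sUnion h, p, hp, h⟩, by simp [rank_fst_lt h]⟩

theorem isName_iff {S : Set ZFSet.{u}} {σ : ZFSet.{u}} :
    IsName S σ ↔ ∀ z ∈ σ, ∃ t p, z = ZFSet.pair t p ∧ p ∈ S ∧ IsName S t := by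
  unfold IsName
  rw [IsNameAux]
  constructor
  · intro h z hz
    obtain ⟨t, p, e, hp, _, h'⟩ := h z hz
    exact ⟨t, p, e, hp, h'⟩
  · intro h z hz
    obtain ⟨t, p, e, hp, h'⟩ := h z hz
    have hz' : z ∈ σ := hz
    exact ⟨t, p, e, hp, rank_fst_lt (e ▸ hz'), h'⟩

/-! ### transitive closures -/

/-- Transitive sets, with quantifiers relativized to `M`. -/
def TrM (𝕄 : GBModel.{u}) (T : ZFSet.{u}) : Prop := ∀ x ∈ 𝕄.M, x ∈ T → ∀ y ∈ 𝕄.M, y ∈ x → y ∈ T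

theorem TrM.dp : DP 𝕄 (TrM 𝕄) := fun _ _ ht =>
  Dfn.all ((Dfn.mem (Tm.var _) ht.wk).imp
    (Dfn.all ((Dfn.mem (Tm.var _) (Tm.var _)).imp (Dfn.mem (Tm.var _) ht.wk.wk))))

theorem TrM.trans {T x y : ZFSet.{u}} (hT : T ∈ 𝕄.M) (h : TrM 𝕄 T) (hx : x ∈ T) (hy : y ∈ x) :
    y ∈ T :=
  h x (𝕄.transitive _ hT _ hx) hx y (𝕄.transitive _ (𝕄.transitive _ hT _ hx) _ hy) hy

theorem TrM.pair {T x y : ZFSet.{u}} (hT : T ∈ 𝕄.M) (h : TrM 𝕄 T) (hx : x.pair y ∈ T) :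
    x ∈ T ∧ y ∈ T := by
  have h1 : ({x, y} : ZFSet) ∈ T := h.trans hT hx (by simp [ZFSet.pair])
  exact ⟨h.trans hT h1 (by simp), h.trans hT h1 (by simp)⟩

theorem exists_TrM (x : ZFSet.{u}) : x ∈ 𝕄.M → ∃ T ∈ 𝕄.M, TrM 𝕄 T ∧ x ∈ T := by
  induction x using ZFSet.inductionOn with
  | _ x ih =>
  intro hx
  have hR : DR 𝕄 (fun y T => TrM 𝕄 T ∧ y ∈ T) := fun n s t hs ht =>
    (TrM.dp _ _ ht).and (Dfn.mem hs ht)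
  obtain ⟨b, hb, h1, h2⟩ := hR.collect hx (fun y hy => ih y hy (𝕄.transitive _ hx _ hy))
  refine ⟨⋃₀ b ∪ {x}, union_mem (𝕄.sUnion_mem _ hb) (sing_mem hx), ?_, by simp⟩
  intro z hz hzT y hy hyz
  rw [ZFSet.mem_union] at hzT ⊢
  left
  rcases hzT with h | h
  · obtain ⟨T, hT, hzT⟩ := ZFSet.mem_sUnion.1 h
    obtain ⟨_, _, hTr, _⟩ := h2 T hT
    exact ZFSet.mem_sUnion.2 ⟨T, hT, hTr z hz hzT y hy hyz⟩
  · rw [ZFSet.mem_singleton] at h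
    subst h
    obtain ⟨T, hT, _, h⟩ := h1 y hyz
    exact ZFSet.mem_sUnion.2 ⟨T, hT, h⟩

/-! ### definability of being a name -/

/-- `T` is a set of names, hereditarily. -/
def Nm (𝕄 : GBModel.{u}) (S : Set ZFSet.{u}) (T : ZFSet.{u}) : Prop :=
  ∀ s ∈ 𝕄.M, s ∈ T → ∀ z ∈ 𝕄.M, z ∈ s → ∃ t ∈ 𝕄.M, ∃ p ∈ 𝕄.M,
    z = ZFSet.pair t p ∧ p ∈ S ∧ t ∈ T

theorem Nm.dp {S : Set ZFSet.{u}} (hS : S ∈ 𝕄.Cls) : DP 𝕄 (Nm 𝕄 S) := fun _ _ ht =>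
  Dfn.all ((Dfn.mem (Tm.var _) ht.wk).imp
    (Dfn.all ((Dfn.mem (Tm.var _) (Tm.var _)).imp
      (Dfn.ex (Dfn.ex ((Dfn.eq (Tm.var _) ((Tm.var _).pair (Tm.var _))).and
        ((Dfn.cls (Tm.var _) hS).and (Dfn.mem (Tm.var _) ht.wk.wk.wk.wk))))))))

theorem Nm.sound {S : Set ZFSet.{u}} {T : ZFSet.{u}} (hT : T ∈ 𝕄.M) (h : Nm 𝕄 S T)
    (s : ZFSet.{u}) : s ∈ T → IsName S s := by
  induction s using name_induction with
  | _ s ih =>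
  intro hs
  have hsM := 𝕄.transitive _ hT _ hs
  rw [isName_iff]
  intro z hz
  obtain ⟨t, _, p, _, rfl, hp, ht⟩ := h s hsM hs z (𝕄.transitive _ hsM _ hz) hz
  exact ⟨t, p, rfl, hp, ih t p hz ht⟩

theorem Nm.exists {S : Set ZFSet.{u}} (hS : S ∈ 𝕄.Cls) (s : ZFSet.{u}) :
    s ∈ 𝕄.M → IsName S s → ∃ T ∈ 𝕄.M, Nm 𝕄 S T ∧ s ∈ T := by
  induction s using name_induction with
  | _ s ih =>
  intro hs hN
  rw [isName_iff] at hN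
  have hR : DR 𝕄 (fun z T => Nm 𝕄 S T ∧ ∃ t ∈ 𝕄.M, ∃ p ∈ 𝕄.M, z = ZFSet.pair t p ∧ p ∈ S ∧
      t ∈ T) := fun n s t hs ht =>
    (Nm.dp hS _ _ ht).and (Dfn.ex (Dfn.ex ((Dfn.eq hs.wk.wk ((Tm.var _).pair (Tm.var _))).and
        ((Dfn.cls (Tm.var _) hS).and (Dfn.mem (Tm.var _) ht.wk.wk)))))
  obtain ⟨b, hb, h1, h2⟩ := hR.collect hs (by
    intro z hz
    obtain ⟨t, p, rfl, hp, ht⟩ := hN z hz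
    have := of_opair_mem' hs hz
    obtain ⟨T, hT, h, h'⟩ := ih t p hz this.1 ht
    exact ⟨T, hT, h, t, this.1, p, this.2, rfl, hp, h'⟩)
  refine ⟨⋃₀ b ∪ {s}, union_mem (𝕄.sUnion_mem _ hb) (sing_mem hs), ?_, by simp⟩
  intro r hr hrT z hz hzr
  rw [ZFSet.mem_union] at hrT
  rcases hrT with h | h
  · obtain ⟨T, hT, hrT⟩ := ZFSet.mem_sUnion.1 h
    obtain ⟨_, _, hNm, _⟩ := h2 T hT
    obtain ⟨t, ht, p, hp, e, hpS, htT⟩ := hNm r hr hrT z hz hzr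
    exact ⟨t, ht, p, hp, e, hpS, ZFSet.mem_union.2 (Or.inl (ZFSet.mem_sUnion.2 ⟨T, hT, htT⟩))⟩
  · rw [ZFSet.mem_singleton] at h
    subst h
    obtain ⟨T, hT, _, t, ht, p, hp, e, hpS, htT⟩ := h1 z hzr
    exact ⟨t, ht, p, hp, e, hpS, ZFSet.mem_union.2 (Or.inl (ZFSet.mem_sUnion.2 ⟨T, hT, htT⟩))⟩

theorem isName_dp {S : Set ZFSet.{u}} (hS : S ∈ 𝕄.Cls) : DP 𝕄 (IsName S) := fun n t ht => by
  have : Dfn 𝕄 n (fun v => ∃ T ∈ 𝕄.M, Nm 𝕄 S T ∧ t v ∈ T) :=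
    Dfn.ex ((Nm.dp hS _ _ (Tm.var _)).and (Dfn.mem ht.wk (Tm.var _)))
  refine this.congr fun v hv => ⟨?_, fun h => Nm.exists hS _ (ht.1 v hv) h⟩
  rintro ⟨T, hT, h, h'⟩
  exact h.sound hT _ h'

/-! ### definability of evaluation -/

/-- `f` is a partial evaluation function. -/
def Ev (𝕄 : GBModel.{u}) (B : ZFSet.{u} → ZFSet.{u} → Prop) (q f : ZFSet.{u}) : Prop :=
  ∀ s ∈ 𝕄.M, ∀ x ∈ 𝕄.M, ZFSet.pair s x ∈ f →
    (∀ y ∈ 𝕄.M, y ∈ x → ∃ t ∈ 𝕄.M, ∃ p ∈ 𝕄.M, B q p ∧ ZFSet.pair t p ∈ s ∧ ZFSet.pair t y ∈ f) ∧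
    (∀ t ∈ 𝕄.M, ∀ p ∈ 𝕄.M, B q p → ZFSet.pair t p ∈ s → ∃ y ∈ 𝕄.M, y ∈ x ∧ ZFSet.pair t y ∈ f)

variable {B : ZFSet.{u} → ZFSet.{u} → Prop}

theorem Ev.dr (hB : DR 𝕄 B) : DR 𝕄 (Ev 𝕄 B) := fun _ _ _ hq hf =>
  Dfn.all (Dfn.all ((Dfn.mem ((Tm.var _).pair (Tm.var _)) hf.wk.wk).imp
    (Dfn.and
      (Dfn.all ((Dfn.mem (Tm.var _) (Tm.var _)).imp (Dfn.ex (Dfn.ex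
        ((hB _ _ _ hq.wk.wk.wk.wk.wk (Tm.var _)).and
          ((Dfn.mem ((Tm.var _).pair (Tm.var _)) (Tm.var _)).and
            (Dfn.mem ((Tm.var _).pair (Tm.var _)) hf.wk.wk.wk.wk.wk)))))))
      (Dfn.all (Dfn.all ((hB _ _ _ hq.wk.wk.wk.wk (Tm.var _)).imp
          ((Dfn.mem ((Tm.var _).pair (Tm.var _)) (Tm.var _)).imp
            (Dfn.ex ((Dfn.mem (Tm.var _) (Tm.var _)).and
              (Dfn.mem ((Tm.var _).pair (Tm.var _)) hf.wk.wk.wk.wk.wk))))))))))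

theorem Ev.sound {q f : ZFSet.{u}} (hf : f ∈ 𝕄.M) (h : Ev 𝕄 B q f) (s : ZFSet.{u}) :
    ∀ x, s.pair x ∈ f → x = nameEval {a | B q a} s := by
  induction s using name_induction with
  | _ s ih =>
  intro x hx
  obtain ⟨hs, hxM⟩ := of_opair_mem' hf hx
  obtain ⟨h1, h2⟩ := h s hs x hxM hx
  ext y
  rw [mem_nameEval]
  constructor
  · intro hy
    obtain ⟨t, _, p, _, hB, htp, hty⟩ := h1 y (𝕄.transitive _ hxM _ hy) hy
    exact ⟨t, p, hB, htp, ih t p htp y hty⟩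
  · rintro ⟨t, p, hB, htp, rfl⟩
    obtain ⟨ht, hp⟩ := of_opair_mem' hs htp
    obtain ⟨y, _, hy, hty⟩ := h2 t ht p hp hB htp
    rw [← ih t p htp y hty]
    exact hy

theorem Ev.exists (hB : DR 𝕄 B) {q : ZFSet.{u}} (hq : q ∈ 𝕄.M) (s : ZFSet.{u}) :
    s ∈ 𝕄.M → ∃ f ∈ 𝕄.M, Ev 𝕄 B q f ∧ ∃ x ∈ 𝕄.M, s.pair x ∈ f := by
  induction s using name_induction with
  | _ s ih =>
  intro hs
  have hR : DR 𝕄 (fun z f => Ev 𝕄 B q f ∧ ∀ t ∈ 𝕄.M, ∀ p ∈ 𝕄.M, z = ZFSet.pair t p →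
      ∃ y ∈ 𝕄.M, ZFSet.pair t y ∈ f) := fun n s t hs ht =>
    (Ev.dr hB _ _ _ (Tm.const hq) ht).and (Dfn.all (Dfn.all
      ((Dfn.eq hs.wk.wk ((Tm.var _).pair (Tm.var _))).imp
        (Dfn.ex (Dfn.mem ((Tm.var _).pair (Tm.var _)) ht.wk.wk.wk)))))
  obtain ⟨b, hb, h1, h2⟩ := hR.collect hs (by
    intro z hz
    by_cases h : ∃ t p, z = ZFSet.pair t p
    · obtain ⟨t, p, rfl⟩ := h
      obtain ⟨f, hf, hE, hx⟩ := ih t p hz (of_opair_mem' hs hz).1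
      refine ⟨f, hf, hE, fun t' _ p' _ e => ?_⟩
      obtain ⟨rfl, rfl⟩ := ZFSet.pair_inj.1 e
      exact hx
    · refine ⟨∅, 𝕄.empty_mem, fun s _ x _ hx => absurd hx (ZFSet.notMem_empty _),
        fun t _ p _ e => absurd ⟨t, p, e⟩ h⟩)
  have hUM := 𝕄.sUnion_mem _ hb
  set U : ZFSet := ⋃₀ b with hU
  have hEU : ∀ r x f, f ∈ b → ZFSet.pair r x ∈ f → r ∈ 𝕄.M → x ∈ 𝕄.M →
    (∀ y ∈ 𝕄.M, y ∈ x → ∃ t ∈ 𝕄.M, ∃ p ∈ 𝕄.M, B q p ∧ ZFSet.pair t p ∈ r ∧ ZFSet.pair t y ∈ U) ∧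
    (∀ t ∈ 𝕄.M, ∀ p ∈ 𝕄.M, B q p → ZFSet.pair t p ∈ r →
      ∃ y ∈ 𝕄.M, y ∈ x ∧ ZFSet.pair t y ∈ U) := by
    intro r x f hf hrx hr hx
    obtain ⟨_, _, hE, _⟩ := h2 f hf
    obtain ⟨e1, e2⟩ := hE r hr x hx hrx
    refine ⟨fun y hy hyx => ?_, fun t ht p hp hBp htp => ?_⟩
    · obtain ⟨t, ht, p, hp, a1, a2, a3⟩ := e1 y hy hyx
      exact ⟨t, ht, p, hp, a1, a2, ZFSet.mem_sUnion.2 ⟨f, hf, a3⟩⟩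
    · obtain ⟨y, hy, a1, a2⟩ := e2 t ht p hp hBp htp
      exact ⟨y, hy, a1, ZFSet.mem_sUnion.2 ⟨f, hf, a2⟩⟩
  have hD : DP 𝕄 (fun y => ∃ t ∈ 𝕄.M, ∃ p ∈ 𝕄.M, B q p ∧ ZFSet.pair t p ∈ s ∧
      ZFSet.pair t y ∈ U) := fun n y hy =>
    Dfn.ex (Dfn.ex ((hB _ _ _ (Tm.const hq) (Tm.var _)).and
      ((Dfn.mem ((Tm.var _).pair (Tm.var _)) (Tm.const hs)).and
        (Dfn.mem ((Tm.var _).pair hy.wk.wk) (Tm.const hUM)))))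
  obtain ⟨x, hxM, hx⟩ := hD.sep (𝕄.sUnion_mem _ (𝕄.sUnion_mem _ hUM))
  refine ⟨U ∪ {s.pair x}, union_mem hUM (sing_mem (opair_mem hs hxM)), ?_, x, hxM, by simp⟩
  have hsub : ∀ z, z ∈ U → z ∈ U ∪ {s.pair x} := fun z hz => ZFSet.mem_union.2 (Or.inl hz)
  intro r hr x' hx' hmem
  rw [ZFSet.mem_union] at hmem
  rcases hmem with h | h
  · obtain ⟨f, hf, hrf⟩ := ZFSet.mem_sUnion.1 h
    obtain ⟨e1, e2⟩ := hEU r x' f hf hrf hr hx'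
    refine ⟨fun y hy hyx => ?_, fun t ht p hp hBp htp => ?_⟩
    · obtain ⟨t, ht, p, hp, a1, a2, a3⟩ := e1 y hy hyx
      exact ⟨t, ht, p, hp, a1, a2, hsub _ a3⟩
    · obtain ⟨y, hy, a1, a2⟩ := e2 t ht p hp hBp htp
      exact ⟨y, hy, a1, hsub _ a2⟩
  · rw [ZFSet.mem_singleton] at h
    obtain ⟨rfl, rfl⟩ := ZFSet.pair_inj.1 h
    refine ⟨fun y hy hyx => ?_, fun t ht p hp hBp htp => ?_⟩
    · obtain ⟨_, t, ht, p, hp, a1, a2, a3⟩ := (hx y).1 hyx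
      exact ⟨t, ht, p, hp, a1, a2, hsub _ a3⟩
    · obtain ⟨f, hf, _, h'⟩ := h1 _ htp
      obtain ⟨y, hy, hty⟩ := h' t ht p hp rfl
      have htU : t.pair y ∈ U := ZFSet.mem_sUnion.2 ⟨f, hf, hty⟩
      exact ⟨y, hy, (hx y).2 ⟨snd_mem_sUnion htU, t, ht, p, hp, hBp, htp, htU⟩, hsub _ htU⟩

theorem nameEval_mem (hB : DR 𝕄 B) {q s : ZFSet.{u}} (hq : q ∈ 𝕄.M) (hs : s ∈ 𝕄.M) :
    nameEval {a | B q a} s ∈ 𝕄.M := by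
  obtain ⟨f, hf, hE, x, hx, h⟩ := Ev.exists hB hq s hs
  rw [← hE.sound hf s x h]; exact hx

theorem Tm.nameEval {n : ℕ} (hB : DR 𝕄 B) {q s : (Fin n → ZFSet.{u}) → ZFSet.{u}}
    (hq : Tm 𝕄 n q) (hs : Tm 𝕄 n s) :
    Tm 𝕄 n (fun v => CF.nameEval {a | B (q v) a} (s v)) := by
  refine ⟨fun v hv => nameEval_mem hB (hq.1 v hv) (hs.1 v hv), ?_⟩
  have : Dfn 𝕄 (n + 1) (fun w => ∃ f ∈ 𝕄.M, Ev 𝕄 B (q (fun i => w i.castSucc)) f ∧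
      (s (fun i => w i.castSucc)).pair (w (Fin.last n)) ∈ f) :=
    Dfn.ex ((Ev.dr hB _ _ _ hq.wk.wk (Tm.var _)).and
      (Dfn.mem (hs.wk.wk.pair (Tm.var _)) (Tm.var _)))
  refine this.congr fun w hw => ⟨?_, fun h => ?_⟩
  · rintro ⟨f, hf, hE, h⟩
    exact hE.sound hf _ _ h
  · obtain ⟨f, hf, hE, x, hx, h'⟩ := Ev.exists hB (hq.1 _ fun i => hw i.castSucc) _
      (hs.1 _ fun i => hw i.castSucc)
    refine ⟨f, hf, hE, ?_⟩
    rw [h]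
    dsimp only
    rw [← hE.sound hf _ x h']
    exact h'

/-! ### check names -/

theorem exists_check {o : ZFSet.{u}} (ho : o ∈ 𝕄.M) (x : ZFSet.{u}) :
    x ∈ 𝕄.M → ∃ σ ∈ 𝕄.M, IsName {a | a = o} σ ∧ nameEval {a | a = o} σ = x := by
  induction x using ZFSet.inductionOn with
  | _ x ih =>
  intro hx
  have hB : DR 𝕄 (fun _ a => a = o) := fun n s t _ ht => Dfn.eq ht (Tm.const ho)
  have hS : {a | a = o} ∈ 𝕄.Cls := by
    have := 𝕄.sets_are_classes _ (sing_mem ho)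
    convert this using 1
    ext a
    exact ZFSet.mem_singleton.symm
  have hR : DR 𝕄 (fun y σ => IsName {a | a = o} σ ∧ nameEval {a | a = o} σ = y) :=
    fun n s t hs ht => (isName_dp hS _ _ ht).and
      (Dfn.eq (Tm.nameEval hB (Tm.const 𝕄.empty_mem) ht) hs)
  obtain ⟨b, hb, h1, h2⟩ := hR.collect hx fun y hy => ih y hy (𝕄.transitive _ hx _ hy)
  have hR' : DR 𝕄 (fun t z => z = ZFSet.pair t o) := fun n s t hs ht =>
    Dfn.eq ht (hs.pair (Tm.const ho))
  obtain ⟨σ, hσ, h3, h4⟩ := hR'.collect hb fun t ht =>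
    ⟨_, opair_mem (𝕄.transitive _ hb _ ht) ho, rfl⟩
  refine ⟨σ, hσ, ?_, ?_⟩
  · rw [isName_iff]
    intro z hz
    obtain ⟨t, ht, rfl⟩ := h4 z hz
    obtain ⟨y, _, hN, _⟩ := h2 t ht
    exact ⟨t, o, rfl, rfl, hN⟩
  · ext y
    rw [mem_nameEval]
    constructor
    · rintro ⟨t, p, rfl, htp, rfl⟩
      obtain ⟨t', ht', e⟩ := h4 _ htp
      obtain ⟨rfl, _⟩ := ZFSet.pair_inj.1 e
      obtain ⟨y, hy, _, rfl⟩ := h2 t ht'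
      exact hy
    · intro hy
      obtain ⟨t, ht, _, e⟩ := h1 y hy
      obtain ⟨z, hz, rfl⟩ := h3 t ht
      exact ⟨t, o, rfl, hz, e.symm⟩

theorem IsName.mono {S S' : Set ZFSet.{u}} (h : S ⊆ S') (σ : ZFSet.{u}) :
    IsName S σ → IsName S' σ := by
  induction σ using name_induction with
  | _ s ih =>
  intro hs
  rw [isName_iff] at hs ⊢
  intro z hz
  obtain ⟨t, p, rfl, hp, ht⟩ := hs z hz
  exact ⟨t, p, rfl, h hp, ih t p hz ht⟩

theorem nameEval_of_subset {S G : Set ZFSet.{u}} (h : S ⊆ G) (σ : ZFSet.{u}) :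
    IsName S σ → nameEval G σ = nameEval S σ := by
  induction σ using name_induction with
  | _ s ih =>
  intro hs
  rw [isName_iff] at hs
  ext y
  rw [mem_nameEval, mem_nameEval]
  constructor
  · rintro ⟨t, p, hp, htp, rfl⟩
    obtain ⟨t', p', e, hp', ht'⟩ := hs _ htp
    obtain ⟨rfl, rfl⟩ := ZFSet.pair_inj.1 e
    exact ⟨t, p, hp', htp, ih t p htp ht'⟩
  · rintro ⟨t, p, hp, htp, rfl⟩
    obtain ⟨t', p', e, hp', ht'⟩ := hs _ htp
    obtain ⟨rfl, rfl⟩ := ZFSet.pair_inj.1 e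
    exact ⟨t, p, h hp, htp, (ih t p htp ht').symm⟩

end names

/-! ## Forcing -/

section forcing

variable {𝕄 : GBModel.{u}} {F : ClassForcing.{u} 𝕄}

/-- The order restricted to `P`. -/
def Lc (F : ClassForcing.{u} 𝕄) (p q : ZFSet.{u}) : Prop := p ∈ F.P ∧ q ∈ F.P ∧ F.le p q

theorem Lc.dr : DR 𝕄 (Lc F) := fun n s t hs ht => by
  refine (Dfn.cls (hs.pair ht) F.le_cls).congr fun v _ => ?_
  constructor
  · rintro ⟨p, hp, q, hq, h, e⟩
    obtain ⟨e1, e2⟩ := ZFSet.pair_inj.1 e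
    rw [e1, e2]
    exact ⟨hp, hq, h⟩
  · rintro ⟨hp, hq, h⟩
    exact ⟨_, hp, _, hq, h, rfl⟩

theorem P_sub {p : ZFSet.{u}} (hp : p ∈ F.P) : p ∈ 𝕄.M := 𝕄.classes_sub _ F.P_cls hp

/-- Relativized compatibility. -/
def Comp (F : ClassForcing.{u} 𝕄) (p q : ZFSet.{u}) : Prop := ∃ r ∈ 𝕄.M, Lc F r p ∧ Lc F r q

theorem Comp.dr : DR 𝕄 (Comp F) := fun _ _ _ hs ht =>
  Dfn.ex ((Lc.dr _ _ _ (Tm.var _) hs.wk).and (Lc.dr _ _ _ (Tm.var _) ht.wk))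

theorem comp_iff {p q : ZFSet.{u}} (hp : p ∈ F.P) (hq : q ∈ F.P) :
    Comp F p q ↔ Compat F.P F.le p q := by
  constructor
  · rintro ⟨r, _, h1, h2⟩; exact ⟨r, h1.1, h1.2.2, h2.2.2⟩
  · rintro ⟨r, hr, h1, h2⟩; exact ⟨r, P_sub hr, ⟨hr, hp, h1⟩, ⟨hr, hq, h2⟩⟩

/-- `a ∈ P` and `q ≤* a`. -/
def Bq (F : ClassForcing.{u} 𝕄) (q a : ZFSet.{u}) : Prop :=
  a ∈ F.P ∧ ∀ r ∈ 𝕄.M, Lc F r q → Comp F r a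

theorem Bq.dr : DR 𝕄 (Bq F) := fun _ _ _ hs ht =>
  (Dfn.cls ht F.P_cls).and (Dfn.all ((Lc.dr _ _ _ (Tm.var _) hs.wk).imp
    (Comp.dr _ _ _ (Tm.var _) ht.wk)))

theorem bq_iff {q a : ZFSet.{u}} (hq : q ∈ F.P) (ha : a ∈ F.P) :
    Bq F q a ↔ leStar F.P F.le q a := by
  constructor
  · rintro ⟨_, h⟩ r hr hrq
    exact (comp_iff hr ha).1 (h r (P_sub hr) ⟨hr, hq, hrq⟩)
  · intro h
    exact ⟨ha, fun r _ hrq => (comp_iff hrq.1 ha).2 (h r hrq.1 hrq.2.2)⟩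

/-- `q` decides all conditions in a transitive set containing `s`. -/
def Ready (F : ClassForcing.{u} 𝕄) (q s : ZFSet.{u}) : Prop :=
  ∃ T ∈ 𝕄.M, TrM 𝕄 T ∧ s ∈ T ∧ ∀ a ∈ 𝕄.M, a ∈ T → a ∈ F.P → (Bq F q a ∨ ¬ Comp F q a)

theorem Ready.dr : DR 𝕄 (Ready F) := fun _ _ _ hq hs =>
  Dfn.ex ((TrM.dp _ _ (Tm.var _)).and ((Dfn.mem hs.wk (Tm.var _)).and
    (Dfn.all ((Dfn.mem (Tm.var _) (Tm.var _)).imp ((Dfn.cls (Tm.var _) F.P_cls).imp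
      ((Bq.dr _ _ _ hq.wk.wk (Tm.var _)).or (Comp.dr _ _ _ hq.wk.wk (Tm.var _)).not))))))

theorem Ready.down {q r s : ZFSet.{u}} (hq : q ∈ F.P) (hr : r ∈ F.P) (hrq : F.le r q)
    (h : Ready F q s) : Ready F r s := by
  obtain ⟨T, hT, h1, h2, h3⟩ := h
  refine ⟨T, hT, h1, h2, fun a haM ha haP => ?_⟩
  rcases h3 a haM ha haP with h | h
  · refine Or.inl ⟨haP, fun x hx hxr => h.2 x hx ⟨hxr.1, hq, F.le_trans _ _ _ hxr.2.2 hrq⟩⟩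
  · refine Or.inr fun ⟨x, hx, hxr, hxa⟩ => h ⟨x, hx, ⟨hxr.1, hq, F.le_trans _ _ _ hxr.2.2 hrq⟩, hxa⟩

theorem Ready.dense (hsdp : SetDecisionProperty 𝕄 F) {s : ZFSet.{u}} (hs : s ∈ 𝕄.M)
    {p : ZFSet.{u}} (hp : p ∈ F.P) : ∃ q ∈ F.P, F.le q p ∧ Ready F q s := by
  obtain ⟨T, hT, hTr, hsT⟩ := exists_TrM s hs
  obtain ⟨A, hA, hAT⟩ := 𝕄.separation _ F.P_cls T hT
  obtain ⟨q, hq, hqp, hd⟩ := hsdp p hp A hA (fun a ha => ((hAT a).1 ha).2)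
  refine ⟨q, hq, hqp, T, hT, hTr, hsT, fun a _ haT haP => ?_⟩
  rw [bq_iff hq haP, comp_iff hq haP]
  exact hd a ((hAT a).2 ⟨haT, haP⟩)

theorem Ready.generic (hsdp : SetDecisionProperty 𝕄 F) {s : ZFSet.{u}} (hs : s ∈ 𝕄.M)
    {G : Set ZFSet.{u}} (hG : IsGeneric 𝕄 F.P F.le G) {p : ZFSet.{u}} (hp : p ∈ G) :
    ∃ q ∈ G, F.le q p ∧ Ready F q s := by
  have hD : DP 𝕄 (fun q => q ∈ F.P ∧ Ready F q s) := fun n t ht =>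
    (Dfn.cls ht F.P_cls).and (Ready.dr _ _ _ ht (Tm.const hs))
  obtain ⟨q, hqG, _, hqP, hqR⟩ := hG.2 _ hD.cls ⟨fun q hq => hq.2.1, fun r hr => by
    obtain ⟨q, hq, hqr, h⟩ := Ready.dense hsdp hs hr
    exact ⟨q, ⟨P_sub hq, hq, h⟩, hqr⟩⟩
  obtain ⟨r, hr, hrp, hrq⟩ := hG.1.2.2.2 p hp q hqG
  exact ⟨r, hr, hrp, hqR.down hqP (hG.1.1 hr) hrq⟩

theorem generic_bq {G : Set ZFSet.{u}} (hG : IsGeneric 𝕄 F.P F.le G) {q a : ZFSet.{u}}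
    (hq : q ∈ G) (h : Bq F q a) : a ∈ G := by
  have hqP := hG.1.1 hq
  have hD : DP 𝕄 (fun r => r ∈ F.P ∧ (Lc F r a ∨ ¬ Comp F r q)) := fun n t ht =>
    (Dfn.cls ht F.P_cls).and ((Lc.dr _ _ _ ht (Tm.const (P_sub h.1))).or
      (Comp.dr _ _ _ ht (Tm.const (P_sub hqP))).not)
  obtain ⟨r, hrG, _, hrP, hr⟩ := hG.2 _ hD.cls ⟨fun q hq => hq.2.1, fun p hp => by
    by_cases hc : Comp F p q
    · obtain ⟨r, hr, hrp, hrq⟩ := hc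
      obtain ⟨x, hx, hxr, hxa⟩ := h.2 r hr hrq
      exact ⟨x, ⟨hx, hxr.1, Or.inl hxa⟩, F.le_trans _ _ _ hxr.2.2 hrp.2.2⟩
    · exact ⟨p, ⟨P_sub hp, hp, Or.inr hc⟩, F.le_refl p hp⟩⟩
  rcases hr with hr | hr
  · exact hG.1.2.2.1 r hrG a h.1 hr.2.2
  · obtain ⟨x, hx, h1, h2⟩ := hG.1.2.2.2 r hrG q hq
    exact absurd ((comp_iff hrP hqP).2 ⟨x, hG.1.1 hx, h1, h2⟩) hr

theorem eval_generic {G : Set ZFSet.{u}} (hG : IsGeneric 𝕄 F.P F.le G) {q s : ZFSet.{u}}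
    (hq : q ∈ G) (h : Ready F q s) : nameEval G s = nameEval {a | Bq F q a} s := by
  obtain ⟨T, hT, hTr, hsT, hd⟩ := h
  have hqP := hG.1.1 hq
  have key : ∀ a ∈ T, (a ∈ G ↔ Bq F q a) := by
    intro a ha
    refine ⟨fun haG => ?_, generic_bq hG hq⟩
    have haP := hG.1.1 haG
    rcases hd a (P_sub haP) ha haP with h | h
    · exact h
    · obtain ⟨x, hx, h1, h2⟩ := hG.1.2.2.2 q hq a haG
      exact absurd ((comp_iff hqP haP).2 ⟨x, hG.1.1 hx, h1, h2⟩) h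
  clear hd
  induction s using name_induction with
  | _ s ih =>
  ext y
  rw [mem_nameEval, mem_nameEval]
  refine exists_congr fun t => exists_congr fun p => ?_
  constructor
  · rintro ⟨hp, htp, rfl⟩
    obtain ⟨htT, hpT⟩ := hTr.pair hT (hTr.trans hT hsT htp)
    exact ⟨(key p hpT).1 hp, htp, ih t p htp htT⟩
  · rintro ⟨hp, htp, rfl⟩
    obtain ⟨htT, hpT⟩ := hTr.pair hT (hTr.trans hT hsT htp)
    exact ⟨(key p hpT).2 hp, htp, (ih t p htp htT).symm⟩

theorem mgen_eq (hsdp : SetDecisionProperty 𝕄 F) {G : Set ZFSet.{u}}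
    (hG : IsGeneric 𝕄 F.P F.le G) : MGen 𝕄 F.P G = 𝕄.M := by
  obtain ⟨g, hg⟩ := hG.1.2.1
  ext x
  constructor
  · rintro ⟨σ, hσ, _, rfl⟩
    obtain ⟨q, hq, _, hR⟩ := Ready.generic hsdp hσ hG hg
    rw [eval_generic hG hq hR]
    exact nameEval_mem Bq.dr (P_sub (hG.1.1 hq)) hσ
  · intro hx
    obtain ⟨σ, hσ, hN, he⟩ := exists_check (P_sub F.one_mem) x hx
    have h1 : F.one ∈ G := hG.1.2.2.1 g hg _ F.one_mem (F.le_one g (hG.1.1 hg))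
    refine ⟨σ, hσ, hN.mono ?_, ?_⟩
    · rintro a rfl; exact F.one_mem
    · rw [nameEval_of_subset (S := {a | a = F.one}) ?_ σ hN]
      · exact he
      · rintro a rfl; exact h1

theorem exists_generic {p : ZFSet.{u}} (hp : p ∈ F.P) :
    ∃ G, IsGeneric 𝕄 F.P F.le G ∧ p ∈ G := by
  obtain ⟨D, hD⟩ := 𝕄.countable_Cls.exists_eq_range ⟨_, empty_cls 𝕄⟩
  have step : ∀ (k : ℕ) (x : {x // x ∈ F.P}), ∃ y : {x // x ∈ F.P},
      F.le y.1 x.1 ∧ (DenseIn F.P F.le (D k) → y.1 ∈ D k) := by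
    intro k x
    by_cases h : DenseIn F.P F.le (D k)
    · obtain ⟨q, hq, hqx⟩ := h.2 x x.2
      exact ⟨⟨q, h.1 hq⟩, hqx, fun _ => hq⟩
    · exact ⟨x, F.le_refl _ x.2, fun h' => absurd h' h⟩
  choose g hg1 hg2 using step
  let c : ℕ → {x // x ∈ F.P} := fun k => Nat.rec (motive := fun _ => {x // x ∈ F.P}) ⟨p, hp⟩ (fun k x => g k x) k
  have hc : ∀ k, c (k + 1) = g k (c k) := fun k => rfl
  have mono : ∀ i j, i ≤ j → F.le (c j).1 (c i).1 := by
    intro i j hij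
    induction j, hij using Nat.le_induction with
    | base => exact F.le_refl _ (c i).2
    | succ j _ ih => exact F.le_trans _ _ _ (by rw [hc]; exact hg1 j (c j)) ih
  refine ⟨{r | r ∈ F.P ∧ ∃ k, F.le (c k).1 r}, ⟨⟨fun r hr => hr.1, ⟨p, hp, 0, F.le_refl p hp⟩,
    ?_, ?_⟩, ?_⟩, hp, 0, F.le_refl p hp⟩
  · rintro r ⟨_, k, hk⟩ q hq hrq
    exact ⟨hq, k, F.le_trans _ _ _ hk hrq⟩
  · rintro r ⟨_, k, hk⟩ q ⟨_, l, hl⟩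
    exact ⟨(c (max k l)).1, ⟨(c _).2, max k l, F.le_refl _ (c _).2⟩,
      F.le_trans _ _ _ (mono _ _ (le_max_left _ _)) hk,
      F.le_trans _ _ _ (mono _ _ (le_max_right _ _)) hl⟩
  · intro E hE hdense
    rw [hD] at hE
    obtain ⟨k, rfl⟩ := hE
    exact ⟨(c (k + 1)).1, ⟨(c (k + 1)).2, k + 1, F.le_refl _ (c (k + 1)).2⟩, by rw [hc]; exact hg2 k (c k) hdense⟩

theorem Ready.list {q : ZFSet.{u}} (l : List ZFSet.{u}) (h : Ready F q (listEncode l)) :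
    ∀ s ∈ l, Ready F q s := by
  induction l with
  | nil => simp
  | cons a l ih =>
    obtain ⟨T, hT, hTr, h1, h2⟩ := h
    obtain ⟨ha, hl⟩ := hTr.pair hT h1
    intro s hs
    rcases List.mem_cons.1 hs with rfl | hs
    · exact ⟨T, hT, hTr, ha, h2⟩
    · exact ih ⟨T, hT, hTr, hl, h2⟩ s hs

theorem listEncode_mem (l : List ZFSet.{u}) (h : ∀ s ∈ l, s ∈ 𝕄.M) : listEncode l ∈ 𝕄.M := by
  induction l with
  | nil => exact 𝕄.empty_mem
  | cons a l ih =>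
    exact opair_mem (h a (by simp)) (ih fun s hs => h s (by simp [hs]))

theorem assign_generic {G : Set ZFSet.{u}} (hG : IsGeneric 𝕄 F.P F.le G) {m : ℕ}
    {σs : Fin m → ZFSet.{u}} {q : ZFSet.{u}} (hq : q ∈ G)
    (hR : Ready F q (listEncode (List.ofFn σs))) :
    namesAssign G m σs = extA (fun i => nameEval {a | Bq F q a} (σs i)) := by
  funext k
  unfold namesAssign extA
  split_ifs with h
  · exact eval_generic hG hq (hR.list _ _ (by simp))
  · rfl

theorem forces_iff (hsdp : SetDecisionProperty 𝕄 F) (φ : EFormula) {m : ℕ}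
    {σs : Fin m → ZFSet.{u}} (hσ : ∀ i, σs i ∈ 𝕄.M) {p : ZFSet.{u}} (hp : p ∈ F.P) :
    Forces 𝕄 F φ m p σs ↔ ∀ q ∈ 𝕄.M, Lc F q p → Ready F q (listEncode (List.ofFn σs)) →
      EFormula.Sat 𝕄.M (extA (fun i => nameEval {a | Bq F q a} (σs i))) φ := by
  have hl : listEncode (List.ofFn σs) ∈ 𝕄.M := listEncode_mem _ (by
    intro s hs
    obtain ⟨i, rfl⟩ := (List.mem_ofFn' _ _).1 hs
    exact hσ i)
  constructor
  · intro h q _ hqp hR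
    obtain ⟨G, hG, hqG⟩ := exists_generic hqp.1
    have := h G hG (hG.1.2.2.1 q hqG p hp hqp.2.2)
    rwa [mgen_eq hsdp hG, assign_generic hG hqG hR] at this
  · intro h G hG hpG
    obtain ⟨q, hq, hqp, hR⟩ := Ready.generic hsdp hl hG hpG
    have hqP := hG.1.1 hq
    rw [mgen_eq hsdp hG, assign_generic hG hq hR]
    exact h q (P_sub hqP) ⟨hqP, hp, hqp⟩ hR

theorem Tm.iter_snd {n : ℕ} {t : (Fin n → ZFSet.{u}) → ZFSet.{u}} (ht : Tm 𝕄 n t) (k : ℕ) :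
    Tm 𝕄 n (fun v => sndZ^[k] (t v)) := by
  induction k with
  | zero => exact ht
  | succ k ih =>
    simp only [Function.iterate_succ', Function.comp]
    exact ih.fst.2

theorem decode_list {m : ℕ} (σs : Fin m → ZFSet.{u}) (i : Fin m) :
    fstZ (sndZ^[(i : ℕ)] (listEncode (List.ofFn σs))) = σs i := by
  induction m with
  | zero => exact i.elim0
  | succ m ih =>
    rw [List.ofFn_succ, listEncode]
    refine Fin.cases ?_ (fun j => ?_) i
    · simp [fstZ_pair]
    · simp only [Fin.val_succ, Function.iterate_succ, Function.comp, sndZ_pair]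
      exact ih (fun i => σs i.succ) j

theorem forcing_class (hsdp : SetDecisionProperty 𝕄 F) (φ : EFormula) (m : ℕ)
    (hφ : φ.VarsLt m) :
    {x : ZFSet.{u} | ∃ p ∈ F.P, ∃ σs : Fin m → ZFSet.{u},
        (∀ i, σs i ∈ 𝕄.M ∧ IsName F.P (σs i)) ∧
        Forces 𝕄 F φ m p σs ∧
        x = p.pair (listEncode (List.ofFn σs))} ∈ 𝕄.Cls := by
  let d : Fin m → ZFSet.{u} → ZFSet.{u} := fun i x => fstZ (sndZ^[(i : ℕ)] (sndZ x))
  have hd : ∀ (i : Fin m) {n : ℕ} {t : (Fin n → ZFSet.{u}) → ZFSet.{u}}, Tm 𝕄 n t →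
      Tm 𝕄 n (fun v => d i (t v)) := fun i n t ht => (ht.fst.2.iter_snd i).fst.1
  have hD : DP 𝕄 (fun x => fstZ x ∈ F.P ∧ (∀ i, IsName F.P (d i x)) ∧
      x = (fstZ x).pair (listEncode (List.ofFn fun i => d i x)) ∧
      ∀ q ∈ 𝕄.M, Lc F q (fstZ x) → Ready F q (listEncode (List.ofFn fun i => d i x)) →
      EFormula.Sat 𝕄.M (extA (fun i => nameEval {a | Bq F q a} (d i x))) φ) := by
    intro n t ht
    refine (Dfn.cls ht.fst.1 F.P_cls).and ((Dfn.allFin fun i => isName_dp F.P_cls _ _ (hd i ht)).and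
      ((Dfn.eq ht (ht.fst.1.pair (Tm.listEncode fun i => hd i ht))).and (Dfn.all
        ((Lc.dr _ _ _ (Tm.var _) ht.fst.1.wk).imp
          ((Ready.dr _ _ _ (Tm.var _) (Tm.listEncode fun i => hd i ht).wk).imp ?_)))))
    exact Dfn.sat φ hφ (n + 1)
      (fun i w => nameEval {a | Bq F (w (Fin.last n)) a} (d i (t fun i => w i.castSucc)))
      (fun i => Tm.nameEval Bq.dr (Tm.var _) (hd i ht).wk)
  convert hD.cls using 1
  ext x
  constructor
  · rintro ⟨p, hp, σs, hσ, hF, rfl⟩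
    have e1 : ∀ i, d i (p.pair (listEncode (List.ofFn σs))) = σs i := fun i => by
      simp only [d, sndZ_pair, decode_list]
    have hl : listEncode (List.ofFn σs) ∈ 𝕄.M := listEncode_mem _ (by
      intro s hs
      obtain ⟨i, rfl⟩ := (List.mem_ofFn' _ _).1 hs
      exact (hσ i).1)
    refine ⟨opair_mem (P_sub hp) hl, ?_⟩
    simp only [e1, fstZ_pair]
    exact ⟨hp, fun i => (hσ i).2, trivial, (forces_iff hsdp φ (fun i => (hσ i).1) hp).1 hF⟩
  · rintro ⟨hx, h1, h2, h3, h4⟩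
    have hM : ∀ i, d i x ∈ 𝕄.M := fun i =>
      (hd i (Tm.const (n := 0) hx)).1 Fin.elim0 (fun i => i.elim0)
    exact ⟨fstZ x, h1, fun i => d i x, fun i => ⟨hM i, h2 i⟩,
      (forces_iff hsdp φ hM h1).2 h4, h3⟩

theorem truth_lemma (hsdp : SetDecisionProperty 𝕄 F) (φ : EFormula) (m : ℕ)
    {σs : Fin m → ZFSet.{u}} (hσ : ∀ i, σs i ∈ 𝕄.M) {G : Set ZFSet.{u}}
    (hG : IsGeneric 𝕄 F.P F.le G)
    (h : EFormula.Sat (MGen 𝕄 F.P G) (namesAssign G m σs) φ) :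
    ∃ p ∈ G, Forces 𝕄 F φ m p σs := by
  have hl : listEncode (List.ofFn σs) ∈ 𝕄.M := listEncode_mem _ (by
    intro s hs
    obtain ⟨i, rfl⟩ := (List.mem_ofFn' _ _).1 hs
    exact hσ i)
  obtain ⟨g, hg⟩ := hG.1.2.1
  obtain ⟨q, hq, _, hR⟩ := Ready.generic hsdp hl hG hg
  refine ⟨q, hq, fun G' hG' hq' => ?_⟩
  rw [mgen_eq hsdp hG, assign_generic hG hq hR] at h
  rw [mgen_eq hsdp hG', assign_generic hG' hq' hR]
  exact h

end forcing

/-- If `ℙ` is a notion of class forcing for a countable transitive model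
`𝕄 = ⟨M, 𝒞⟩` of `GB⁻` with the set decision property, then `ℙ` satisfies the forcing theorem
over `𝕄` and adds no new sets: `M[G] = M` for every `ℙ`-generic `G` over `𝕄`. -/
theorem set_decision_implies_forcing_theorem_and_no_new_sets
    (𝕄 : GBModel) (F : ClassForcing 𝕄) (hsdp : SetDecisionProperty 𝕄 F) :
    SatisfiesForcingTheorem 𝕄 F ∧
      ∀ G : Set ZFSet, IsGeneric 𝕄 F.P F.le G → MGen 𝕄 F.P G = 𝕄.M := by
  exact ⟨fun φ m hφ => ⟨forcing_class hsdp φ m hφ, fun σs hσ G hG h =>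
    truth_lemma hsdp φ m (fun i => (hσ i).1) hG h⟩, fun G hG => mgen_eq hsdp hG⟩

end CF
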